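/- Let (T,f) be a Hubbard tree and let z₁ be a characteristic periodic point with itinerary τ and exact period n. If n occurs in the internal address of τ, then the first return map f^n of z₁ sends the local arm at z₁ pointing toward c₀ to the local arm pointing toward c₁, and it permutes all local arms at z₁ transitively in a single cycle. If n does not occur in the internal address of τ, then f^n fixes the local arm at z₁ pointing toward c₀ and permutes all other local arms at z₁ transitively in a single cycle. In particular, a characteristic periodic branch point of period n is evil if and only if the internal address of its itinerary does not contain n. -/

import Mathlib

/- Common definitions for formalizing "Admissibility of kneading sequences and
structure of Hubbard trees for quadratic polynomials" by Bruin–Schleicher. -/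

namespace HubbardTrees

/-- The symbols `0`, `1`, `*` used for itineraries and kneading sequences. -/
inductive Sym : Type
  | zero : Sym
  | one : Sym
  | star : Sym
deriving DecidableEq

/-- `A` is an arc in `X` joining `x` and `y` (a point if `x = y`, otherwise a
homeomorphic image of `[0,1]` with endpoints `x` and `y`). -/
def IsArcBetween {X : Type*} [TopologicalSpace X] (A : Set X) (x y : X) : Prop :=
  (x = y ∧ A = {x}) ∨
  (x ≠ y ∧ ∃ γ : Path x y, Topology.IsEmbedding ⇑γ ∧ Set.range ⇑γ = A)

/-- The global arms at `x`: the connected components of `X \ {x}`. -/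
def arms {X : Type*} [TopologicalSpace X] (x : X) : Set (Set X) :=
  {C | ∃ y, y ≠ x ∧ C = connectedComponentIn {x}ᶜ y}

/-- The global arm at `x` containing `y` (for `y ≠ x`): the component of `X \ {x}`
containing `y`.  Local arms at `x` being germs of global arms, we represent the local
arm at `x` pointing towards `y` by this set. -/
def armTo {X : Type*} [TopologicalSpace X] (x y : X) : Set X :=
  connectedComponentIn {x}ᶜ y

/-- `x` is an endpoint: it has exactly one arm. -/
def IsEndpoint {X : Type*} [TopologicalSpace X] (x : X) : Prop :=
  (arms x).ncard = 1

/-- `x` is a branch point: it has at least three arms. -/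
def IsBranchPt {X : Type*} [TopologicalSpace X] (x : X) : Prop :=
  3 ≤ (arms x).ncard

/-- `f` maps the set `A` homeomorphically onto its image. -/
def MapsHomeoOn {X : Type*} [TopologicalSpace X] (f : X → X) (A : Set X) : Prop :=
  Topology.IsEmbedding (A.restrict f)

/-- `f` is a local homeomorphism onto its image at `x`. -/
def IsLocalHomeoAt {X : Type*} [TopologicalSpace X] (f : X → X) (x : X) : Prop :=
  ∃ U : Set X, IsOpen U ∧ x ∈ U ∧ Topology.IsEmbedding (U.restrict f)

/-- `g` sends the local arm at `x` represented by the global arm `C` to the local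
arm at `g x` represented by `C'` (germ condition: some initial piece of `C` at `x`
is mapped into `C'`). -/
def MapsLocalArm {X : Type*} [TopologicalSpace X] (g : X → X) (x : X) (C C' : Set X) : Prop :=
  C ∈ arms x ∧ C' ∈ arms (g x) ∧ ∃ U ∈ nhds x, g '' (C ∩ U) ⊆ C'

/-- `z` is periodic under `f` with exact period `n`. -/
def ExactPeriod {Y : Type*} (f : Y → Y) (z : Y) (n : ℕ) : Prop :=
  1 ≤ n ∧ f^[n] z = z ∧ ∀ k, 1 ≤ k → k < n → f^[k] z ≠ z

/-- The first return map `f^[n]` of the fixed point `z` of `f^[n]` permutes all the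
local arms at `z` transitively in a single cycle. -/
def ArmsTransitive {X : Type*} [TopologicalSpace X] (f : X → X) (n : ℕ) (z : X) : Prop :=
  ∀ C ∈ arms z, ∀ C' ∈ arms z, ∃ j : ℕ, MapsLocalArm (f^[n * j]) z C C'

/-- An (abstract) Hubbard tree: a finite topological tree `X` together with a
continuous surjection `f` and a critical point `c0`, subject to the axioms of
Bruin–Schleicher. -/
structure HubbardTree (X : Type*) [TopologicalSpace X] : Type _ where
  /-- the dynamics -/
  f : X → X
  /-- the critical point -/
  c0 : X
  compact : CompactSpace X
  t2 : T2Space X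
  conn : ConnectedSpace X
  /-- the unique arc `[x,y]` joining two points -/
  arc : X → X → Set X
  arc_isArc : ∀ x y : X, IsArcBetween (arc x y) x y
  arc_unique : ∀ (x y : X) (A : Set X), IsArcBetween A x y → A = arc x y
  -- finiteness of the tree
  arms_finite : ∀ x : X, (arms x).Finite
  branch_finite : Set.Finite {x : X | IsBranchPt x}
  endpoint_finite : Set.Finite {x : X | IsEndpoint x}
  cont : Continuous f
  surj : Function.Surjective f
  /-- every point has at most two inverse images -/
  two_preimages : ∀ y : X, ∃ a b : X, f ⁻¹' {y} ⊆ {a, b}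
  /-- local homeomorphism onto its image away from the critical point -/
  local_homeo : ∀ x : X, x ≠ c0 → IsLocalHomeoAt f x
  /-- all endpoints lie on the critical orbit -/
  endpoints_on_orbit : ∀ x : X, IsEndpoint x → ∃ k : ℕ, f^[k] c0 = x
  /-- the critical point is periodic or preperiodic -/
  crit_preperiodic : ∃ k n : ℕ, 1 ≤ n ∧ f^[k + n] c0 = f^[k] c0
  /-- the critical point is not fixed -/
  crit_not_fixed : f c0 ≠ c0
  /-- expansivity -/
  expansive : ∀ x y : X, x ≠ y →
    (IsBranchPt x ∨ ∃ k : ℕ, f^[k] c0 = x) →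
    (IsBranchPt y ∨ ∃ k : ℕ, f^[k] c0 = y) →
    ∃ n : ℕ, c0 ∈ f^[n] '' (arc x y)

namespace HubbardTree

variable {X : Type*} [TopologicalSpace X] (H : HubbardTree X)

/-- The critical value `c₁ = f(c₀)`. -/
def c1 : X := H.f H.c0

/-- The component `T₁` of `T \ {c₀}` containing the critical value. -/
def T1 : Set X := connectedComponentIn {H.c0}ᶜ H.c1

open Classical in
/-- The symbol (`0`, `1` or `*`) attached to a point of the tree. -/
noncomputable def symOf (x : X) : Sym :=
  if x = H.c0 then Sym.star else if x ∈ H.T1 then Sym.one else Sym.zero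

/-- The itinerary of `x`: a sequence of symbols, 1-indexed (the value at index `0`
is irrelevant); entry `k ≥ 1` is the symbol of `f^[k-1] x`. -/
noncomputable def itin (x : X) : ℕ → Sym :=
  fun k => H.symOf (H.f^[k - 1] x)

/-- The kneading sequence: the itinerary of the critical value (1-indexed). -/
noncomputable def kneading : ℕ → Sym := H.itin H.c1

/-- `z` is the characteristic point of its periodic orbit: `c₁` lies in one
component of `X \ {z}` while `c₀` and all other points of the orbit lie in a
different component. -/
def IsCharacteristic (z : X) : Prop :=
  ∃ Cv Cz : Set X, Cv ∈ arms z ∧ Cz ∈ arms z ∧ Cv ≠ Cz ∧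
    H.c1 ∈ Cv ∧ H.c0 ∈ Cz ∧ ∀ k : ℕ, H.f^[k] z ≠ z → H.f^[k] z ∈ Cz

/-- The first return map fixes the local arm at `z` pointing to the critical point
and permutes all other local arms transitively in a single cycle. -/
def OtherArmsTransitive (n : ℕ) (z : X) : Prop :=
  ∀ C ∈ arms z, C ≠ armTo z H.c0 → ∀ C' ∈ arms z, C' ≠ armTo z H.c0 →
    ∃ j : ℕ, MapsLocalArm (H.f^[n * j]) z C C'

/-- `z` is the characteristic point of an evil periodic orbit of branch points of
exact period `n`. -/
def IsEvilOrbit (z : X) (n : ℕ) : Prop :=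
  ExactPeriod H.f z n ∧ (∀ k : ℕ, IsBranchPt (H.f^[k] z)) ∧
    H.IsCharacteristic z ∧ ¬ ArmsTransitive H.f n z

/-- `x` is precritical with `Step(x) = k`: `k ≥ 1` is minimal with `f^[k] x = c₁`. -/
def Step (x : X) (k : ℕ) : Prop :=
  1 ≤ k ∧ H.f^[k] x = H.c1 ∧ ∀ j, 1 ≤ j → j < k → H.f^[j] x ≠ H.c1

/-- `x` is the closest precritical point `ζ_k`. -/
def IsClosestPrecritical (x : X) (k : ℕ) : Prop :=
  H.Step x k ∧ ∀ j, 1 ≤ j → j < k → H.c1 ∉ H.f^[j] '' (H.arc H.c1 x)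

/-- `x` is the earliest precritical point on the set `A`, with `Step(x) = k`:
it is a precritical point on `A` of minimal Step. -/
def IsEarliestPrecriticalOn (A : Set X) (x : X) (k : ℕ) : Prop :=
  x ∈ A ∧ H.Step x k ∧ ∀ y ∈ A, ∀ j : ℕ, H.Step y j → k ≤ j

/-- Marked points: branch points and points of the critical orbit. -/
def MarkedPt (x : X) : Prop :=
  IsBranchPt x ∨ ∃ k : ℕ, H.f^[k] H.c0 = x

/-- Two marked points are joined by an edge if the arc between them contains no
further marked point. -/
def IsEdge (x y : X) : Prop :=
  H.MarkedPt x ∧ H.MarkedPt y ∧ x ≠ y ∧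
    ∀ w ∈ H.arc x y, H.MarkedPt w → w = x ∨ w = y

/-- Equivalence of Hubbard trees: a bijection between the marked points which
conjugates the dynamics and preserves edges. -/
def Equivalent {Y : Type*} [TopologicalSpace Y] (H' : HubbardTree Y) : Prop :=
  ∃ φ : X → Y,
    (∀ x : X, H.MarkedPt x → H'.MarkedPt (φ x)) ∧
    (∀ x x' : X, H.MarkedPt x → H.MarkedPt x' → φ x = φ x' → x = x') ∧
    (∀ y : Y, H'.MarkedPt y → ∃ x : X, H.MarkedPt x ∧ φ x = y) ∧
    φ H.c0 = H'.c0 ∧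
    (∀ x : X, H.MarkedPt x → φ (H.f x) = H'.f (φ x)) ∧
    (∀ x x' : X, H.MarkedPt x → H.MarkedPt x' →
      (H.IsEdge x x' ↔ H'.IsEdge (φ x) (φ x')))

end HubbardTree

/-! ### Combinatorics of kneading sequences -/

/-- The function `ρ_ν(n) = inf { k > n : ν_k ≠ ν_{k-n} } ∈ ℕ ∪ {∞}` (sequences are
1-indexed). -/
noncomputable def rho (ν : ℕ → Sym) (n : ℕ) : ℕ∞ :=
  sInf {e : ℕ∞ | ∃ j : ℕ, e = (j : ℕ∞) ∧ n < j ∧ ν j ≠ ν (j - n)}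

/-- `RhoOrbit ν k m` means that `m` belongs to the `ρ`-orbit
`k → ρ(k) → ρ(ρ(k)) → ⋯` of `k` (stopped before reaching `∞`). -/
inductive RhoOrbit (ν : ℕ → Sym) : ℕ → ℕ → Prop
  | refl (k : ℕ) : RhoOrbit ν k k
  | step {k m j : ℕ} : RhoOrbit ν k m → rho ν m = (j : ℕ∞) → RhoOrbit ν k j

/-- `m` occurs in the internal address `1 → ρ(1) → ρ(ρ(1)) → ⋯` of `ν`. -/
def InternalAddress (ν : ℕ → Sym) (m : ℕ) : Prop := RhoOrbit ν 1 m

/-- `ν` is a `*`-periodic kneading sequence of (exact) period `n`: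
`ν = overline(1 ν₂ … ν_{n-1} *)`. -/
def StarPeriodic (ν : ℕ → Sym) (n : ℕ) : Prop :=
  2 ≤ n ∧ ν 1 = Sym.one ∧ ν n = Sym.star ∧
    (∀ k, 1 ≤ k → ν (k + n) = ν k) ∧
    (∀ k, 1 ≤ k → k < n → ν k ≠ Sym.star)

/-- `ν` fails the admissibility condition for period `m`. -/
def FailsAdmissibility (ν : ℕ → Sym) (m : ℕ) : Prop :=
  1 ≤ m ∧
  ¬ InternalAddress ν m ∧
  (∀ k : ℕ, k ∣ m → 1 ≤ k → k < m → rho ν k ≤ (m : ℕ∞)) ∧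
  ∃ R r : ℕ, rho ν m = (R : ℕ∞) ∧ 1 ≤ r ∧ r ≤ m ∧ r ≡ R [MOD m] ∧ RhoOrbit ν r m

open Classical in
/-- The number `q(m)` of arms predicted by the kneading sequence, where
`ρ(m) = R < ∞` and `r ∈ {1,…,m}` is congruent to `R` modulo `m`. -/
noncomputable def qArms (ν : ℕ → Sym) (m R r : ℕ) : ℕ :=
  if RhoOrbit ν r m then (R - r) / m + 1 else (R - r) / m + 2


/-! ### Embeddings into the plane and cyclic order of arms -/

/-- Three points in the plane are in (strictly) counterclockwise position. -/
def Ccw (p q r : ℝ × ℝ) : Prop :=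
  0 < (q.1 - p.1) * (r.2 - p.2) - (q.2 - p.2) * (r.1 - p.1)

namespace HubbardTree

variable {X : Type*} [TopologicalSpace X] (H : HubbardTree X)

/-- Under an embedding `φ` of the tree into the plane, `p` is a first exit point of
the arm `C` at `x` through the circle of radius `ε` around `φ x`: `p = φ y` for a
point `y ∈ C` at distance exactly `ε`, such that the arc from `x` to `y` stays
within distance `< ε` before reaching `y`. -/
def ExitPt (φ : X → ℝ × ℝ) (x : X) (C : Set X) (ε : ℝ) (p : ℝ × ℝ) : Prop :=
  ∃ y ∈ C, φ y = p ∧ dist (φ x) p = ε ∧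
    ∀ z ∈ H.arc x y, z ≠ y → dist (φ x) (φ z) < ε

/-- The local arms at `x` represented by the arms `C, C', C''` are in
counterclockwise cyclic order under the embedding `φ`. -/
def ArmsCcw (φ : X → ℝ × ℝ) (x : X) (C C' C'' : Set X) : Prop :=
  ∃ ε₀ : ℝ, 0 < ε₀ ∧ ∀ ε : ℝ, 0 < ε → ε < ε₀ →
    ∀ p p' p'' : ℝ × ℝ, H.ExitPt φ x C ε p → H.ExitPt φ x C' ε p' →
      H.ExitPt φ x C'' ε p'' → Ccw p p' p''

/-- `f` respects the cyclic order (induced by the embedding `φ`) of the local arms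
at all branch points. -/
def RespectsCyclicOrder (φ : X → ℝ × ℝ) : Prop :=
  ∀ x : X, IsBranchPt x →
    ∀ C C' C'' : Set X, C ∈ arms x → C' ∈ arms x → C'' ∈ arms x →
      C ≠ C' → C' ≠ C'' → C ≠ C'' → H.ArmsCcw φ x C C' C'' →
      ∀ D D' D'' : Set X, MapsLocalArm H.f x C D → MapsLocalArm H.f x C' D' →
        MapsLocalArm H.f x C'' D'' → H.ArmsCcw φ (H.f x) D D' D''

/-- The Hubbard tree can be topologically embedded into the plane `ℝ²` so that `f`
respects the cyclic order of the local arms at all branch points. -/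
def PlanarEmbeddable : Prop :=
  ∃ φ : X → ℝ × ℝ, Topology.IsEmbedding φ ∧ H.RespectsCyclicOrder φ

end HubbardTree


section Helpers
open Set

section Arms
variable {X : Type*} [TopologicalSpace X]

lemma armTo_mem {x y : X} (h : y ≠ x) : armTo x y ∈ arms x := ⟨y, h, rfl⟩

lemma mem_armTo {x y : X} (h : y ≠ x) : y ∈ armTo x y := mem_connectedComponentIn h

lemma arm_eq {x y : X} {C : Set X} (hC : C ∈ arms x) (hy : y ∈ C) : C = armTo x y := by
  obtain ⟨w, hw, rfl⟩ := hC
  exact connectedComponentIn_eq hy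

lemma arm_unique {x y : X} {C D : Set X} (hC : C ∈ arms x) (hD : D ∈ arms x)
    (hy : y ∈ C) (hy' : y ∈ D) : C = D := by
  rw [arm_eq hC hy, arm_eq hD hy']

lemma arm_not_mem {x : X} {C : Set X} (hC : C ∈ arms x) : x ∉ C := by
  obtain ⟨w, hw, rfl⟩ := hC
  intro h
  exact connectedComponentIn_subset _ _ h rfl

lemma arm_preconn {x : X} {C : Set X} (hC : C ∈ arms x) : IsPreconnected C := by
  obtain ⟨w, hw, rfl⟩ := hC
  exact isPreconnected_connectedComponentIn

lemma arm_nonempty {x : X} {C : Set X} (hC : C ∈ arms x) : C.Nonempty := by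
  obtain ⟨w, hw, rfl⟩ := hC
  exact ⟨w, mem_connectedComponentIn hw⟩

lemma subset_arm {x y : X} {C S : Set X} (hC : C ∈ arms x) (hS : IsPreconnected S)
    (hx : x ∉ S) (hyS : y ∈ S) (hyC : y ∈ C) : S ⊆ C := by
  rw [arm_eq hC hyC]
  exact hS.subset_connectedComponentIn hyS (by intro s hs h; exact hx (h ▸ hs))

lemma closure_arm {x : X} {C : Set X} (hC : C ∈ arms x) : closure C ⊆ insert x C := by
  intro k hk
  by_cases hkx : k = x
  · exact Or.inl hkx
  right
  obtain ⟨y, hy⟩ := arm_nonempty hC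
  have h1 : IsPreconnected (insert k C) :=
    (arm_preconn hC).subset_closure (subset_insert _ _) (insert_subset hk subset_closure)
  refine subset_arm hC h1 ?_ (mem_insert_of_mem _ hy) hy (mem_insert _ _)
  rintro (h | h)
  · exact hkx h.symm
  · exact arm_not_mem hC h

lemma isClosed_insert_arm [T2Space X] {x : X} {C : Set X} (hC : C ∈ arms x) :
    IsClosed (insert x C) := by
  have : closure (insert x C) ⊆ insert x C := by
    rw [insert_eq, closure_union, closure_singleton]
    exact union_subset subset_union_left (closure_arm hC)
  exact isClosed_of_closure_subset this

lemma isOpen_arm [T2Space X] {x : X} {C : Set X} (hf : (arms x).Finite) (hC : C ∈ arms x) :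
    IsOpen C := by
  have h : C = (⋃ D ∈ arms x \ {C}, insert x D)ᶜ ∩ {x}ᶜ := by
    ext y
    simp only [mem_inter_iff, mem_compl_iff, mem_iUnion, mem_singleton_iff, not_exists]
    constructor
    · intro hy
      have hyx : y ≠ x := fun h => arm_not_mem hC (h ▸ hy)
      refine ⟨fun D hD hyD => ?_, hyx⟩
      rcases hyD with h | h
      · exact hyx h
      · exact hD.2 (arm_unique hD.1 hC h hy)
    · rintro ⟨h1, h2⟩
      by_contra hy
      refine h1 (armTo x y) ⟨armTo_mem h2, ?_⟩ (mem_insert_of_mem _ (mem_armTo h2))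
      intro h
      rw [mem_singleton_iff] at h
      exact hy (h ▸ mem_armTo h2)
  rw [h]
  refine IsOpen.inter ?_ isOpen_compl_singleton
  rw [isOpen_compl_iff]
  exact (hf.subset sdiff_subset).isClosed_biUnion fun D hD => isClosed_insert_arm hD.1

lemma mem_closure_arm [T2Space X] [ConnectedSpace X] {x : X} {C : Set X}
    (hf : (arms x).Finite) (hC : C ∈ arms x) : x ∈ closure C := by
  by_contra h
  have h1 : IsClosed C := by
    refine isClosed_of_closure_subset fun k hk => ?_
    rcases closure_arm hC hk with h' | h'
    · exact absurd (h' ▸ hk) h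
    · exact h'
  have h2 : IsClopen C := ⟨h1, isOpen_arm hf hC⟩
  rcases isClopen_iff.1 h2 with h3 | h3
  · exact (arm_nonempty hC).ne_empty h3
  · exact arm_not_mem hC (h3 ▸ mem_univ x)

lemma insert_arm_preconn [T2Space X] [ConnectedSpace X] {x : X} {C : Set X}
    (hf : (arms x).Finite) (hC : C ∈ arms x) : IsPreconnected (insert x C) :=
  (arm_preconn hC).subset_closure (subset_insert _ _)
    (insert_subset (mem_closure_arm hf hC) subset_closure)

lemma isEndpoint_of {e : X} {C : Set X} (hC : C ∈ arms e) (h : ∀ D ∈ arms e, D = C) :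
    IsEndpoint e := by
  unfold IsEndpoint
  rw [ncard_eq_one]
  exact ⟨C, eq_singleton_iff_unique_mem.2 ⟨hC, h⟩⟩

lemma endpoint_unique {e : X} {C D : Set X} (he : IsEndpoint e) (hC : C ∈ arms e)
    (hD : D ∈ arms e) : C = D := by
  unfold IsEndpoint at he
  rw [ncard_eq_one] at he
  obtain ⟨a, ha⟩ := he
  rw [ha] at hC hD
  rw [mem_singleton_iff.1 hC, mem_singleton_iff.1 hD]

lemma exists_endpoint [T2Space X] [ConnectedSpace X] [CompactSpace X]
    (hf : ∀ x : X, (arms x).Finite) {x : X} {D : Set X} (hD : D ∈ arms x) :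
    ∃ e ∈ D, IsEndpoint e := by
  by_contra hne
  push Not at hne
  have hDx := arm_not_mem hD
  have hcut : ∀ w ∈ D, ∃ E ∈ arms w, x ∉ E := by
    intro w hw
    by_contra h
    push Not at h
    have hwx : x ≠ w := fun h => hDx (h ▸ hw)
    exact hne w hw (isEndpoint_of (armTo_mem hwx) fun E hE => arm_eq hE (h E hE))
  have hsub : ∀ w ∈ D, ∀ E ∈ arms w, x ∉ E → insert w E ⊆ D := by
    intro w hw E hE hx
    refine subset_arm hD (insert_arm_preconn (hf w) hE) ?_ (mem_insert _ _) hw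
    rintro (h | h)
    · exact hDx (h ▸ hw)
    · exact hx h
  have K : ∀ w ∈ D, ∀ E ∈ arms w, x ∉ E → ∀ v ∈ E, ∀ E' ∈ arms v, x ∉ E' →
      insert v E' ⊆ E := by
    intro w hw E hE hx v hv E' hE' hx'
    have hwx : x ≠ w := fun h => hDx (h ▸ hw)
    have hvw : v ≠ w := fun h => arm_not_mem hE (h ▸ hv)
    have h1 : w ∉ E' := by
      intro hwE'
      have : insert w (armTo w x) ⊆ E' := by
        refine subset_arm hE' (insert_arm_preconn (hf w) (armTo_mem hwx)) ?_ (mem_insert _ _) hwE'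
        rintro (h | h)
        · exact hvw h
        · exact hx (arm_unique (armTo_mem hwx) hE h hv ▸ mem_armTo hwx)
      exact hx' (this (mem_insert_of_mem _ (mem_armTo hwx)))
    refine subset_arm hE (insert_arm_preconn (hf v) hE') ?_ (mem_insert _ _) hv
    rintro (h | h)
    · exact hvw h.symm
    · exact h1 h
  let S : Set (Set X) := {F | ∃ w ∈ D, ∃ E ∈ arms w, x ∉ E ∧ F = insert w E}
  have hz : ∃ m, Minimal (· ∈ S) m := by
    refine zorn_superset S fun c hcS hc => ?_
    rcases c.eq_empty_or_nonempty with rfl | hcne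
    · obtain ⟨w, hw⟩ := arm_nonempty hD
      obtain ⟨E, hE, hx⟩ := hcut w hw
      exact ⟨insert w E, ⟨w, hw, E, hE, hx, rfl⟩, by simp⟩
    have hint : (⋂₀ c).Nonempty := by
      have : Nonempty c := hcne.to_subtype
      refine IsCompact.nonempty_sInter_of_directed_nonempty_isCompact_isClosed ?_ ?_ ?_ ?_
      · intro a ha b hb
        rcases hc.total ha hb with h | h
        · exact ⟨a, ha, subset_rfl, h⟩
        · exact ⟨b, hb, h, subset_rfl⟩
      · intro F hF
        obtain ⟨w, hw, E, hE, hx, rfl⟩ := hcS hF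
        exact ⟨w, mem_insert _ _⟩
      · intro F hF
        obtain ⟨w, hw, E, hE, hx, rfl⟩ := hcS hF
        exact (isClosed_insert_arm hE).isCompact
      · intro F hF
        obtain ⟨w, hw, E, hE, hx, rfl⟩ := hcS hF
        exact isClosed_insert_arm hE
    obtain ⟨v, hv⟩ := hint
    have hvD : v ∈ D := by
      obtain ⟨F, hF⟩ := hcne
      obtain ⟨w, hw, E, hE, hx, rfl⟩ := hcS hF
      exact hsub w hw E hE hx (hv _ hF)
    have : ∃ E' ∈ arms v, x ∉ E' ∧ ∀ E ∈ arms v, insert v E ∈ c → E' = E := by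
      by_cases hex : ∃ E0 ∈ arms v, x ∉ E0 ∧ insert v E0 ∈ c
      · obtain ⟨E0, hE0, hx0, hc0⟩ := hex
        refine ⟨E0, hE0, hx0, fun E hE hEc => ?_⟩
        rcases hc.total hc0 hEc with h | h
        · obtain ⟨a, ha⟩ := arm_nonempty hE0
          rcases h (mem_insert_of_mem _ ha) with h' | h'
          · exact absurd (h' ▸ ha) (arm_not_mem hE0)
          · exact arm_unique hE0 hE ha h'
        · obtain ⟨a, ha⟩ := arm_nonempty hE
          rcases h (mem_insert_of_mem _ ha) with h' | h'
          · exact absurd (h' ▸ ha) (arm_not_mem hE)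
          · exact arm_unique hE0 hE h' ha
      · push Not at hex
        obtain ⟨E', hE', hx'⟩ := hcut v hvD
        refine ⟨E', hE', hx', fun E hE hEc => ?_⟩
        obtain ⟨w, hw, E1, hE1, hx1, heq⟩ := hcS hEc
        exact absurd hEc (hex E hE (fun hxE => by
          have : x ∈ insert w E1 := heq ▸ mem_insert_of_mem _ hxE
          rcases this with h | h
          · exact hDx (h ▸ hw)
          · exact hx1 h))
    obtain ⟨E', hE', hx', hE'u⟩ := this
    refine ⟨insert v E', ⟨v, hvD, E', hE', hx', rfl⟩, fun s hs => ?_⟩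
    obtain ⟨w, hw, E, hE, hx, rfl⟩ := hcS hs
    by_cases hwv : w = v
    · subst hwv
      rw [hE'u E hE hs]
    · have hvE : v ∈ E := by
        rcases hv _ hs with h | h
        · exact absurd h.symm hwv
        · exact h
      exact (K w hw E hE hx v hvE E' hE' hx').trans (subset_insert _ _)
  obtain ⟨F, ⟨w, hw, E, hE, hx, rfl⟩, hmin⟩ := hz
  obtain ⟨v, hv⟩ := arm_nonempty hE
  have hvD : v ∈ D := hsub w hw E hE hx (mem_insert_of_mem _ hv)
  obtain ⟨E', hE', hx'⟩ := hcut v hvD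
  have h1 := K w hw E hE hx v hv E' hE' hx'
  have h2 := hmin (y := insert v E') ⟨v, hvD, E', hE', hx', rfl⟩ (h1.trans (subset_insert _ _))
  exact arm_not_mem hE (h1 (h2 (mem_insert _ _)))

end Arms

namespace HubbardTree
variable {X : Type*} [TopologicalSpace X] (H : HubbardTree X)

lemma arc_of_inj {g : ℝ → X} {a b : ℝ} (hab : a ≤ b) (hg : ContinuousOn g (Icc a b))
    (hi : InjOn g (Icc a b)) : H.arc (g a) (g b) = g '' Icc a b := by
  have := H.t2
  symm
  apply H.arc_unique
  rcases hab.eq_or_lt with rfl | hlt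
  · left; simp
  right
  refine ⟨fun h => hlt.ne (hi (left_mem_Icc.2 hab) (right_mem_Icc.2 hab) h), ?_⟩
  have hmem : ∀ t : unitInterval, a + t * (b - a) ∈ Icc a b := by
    intro t
    have h0 := t.2.1
    have h1 := t.2.2
    constructor <;> nlinarith
  let γ : Path (g a) (g b) :=
    { toFun := fun t => g (a + t * (b - a))
      continuous_toFun := by
        refine hg.comp_continuous (by fun_prop) hmem
      source' := by simp
      target' := by simp }
  refine ⟨γ, ?_, ?_⟩
  · refine (Continuous.isClosedEmbedding γ.continuous ?_).isEmbedding
    intro s t hst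
    have := hi (hmem s) (hmem t) hst
    have h2 : (s : ℝ) * (b - a) = t * (b - a) := by linarith
    exact Subtype.ext (mul_right_cancel₀ (by linarith) h2)
  · ext y
    constructor
    · rintro ⟨t, rfl⟩
      exact ⟨_, hmem t, rfl⟩
    · rintro ⟨t, ht, rfl⟩
      have hb : 0 < b - a := by linarith
      refine ⟨⟨(t - a) / (b - a), ?_, ?_⟩, ?_⟩
      · exact div_nonneg (by linarith [ht.1]) hb.le
      · rw [div_le_one hb]; linarith [ht.2]
      · change g (a + (t - a) / (b - a) * (b - a)) = g t
        congr 1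
        field_simp
        ring

lemma arc_param (x y : X) : ∃ (g : ℝ → X) (b : ℝ), 0 ≤ b ∧ Continuous g ∧ InjOn g (Icc 0 b) ∧
    g 0 = x ∧ g b = y ∧ H.arc x y = g '' Icc 0 b := by
  rcases H.arc_isArc x y with ⟨h, h'⟩ | ⟨h, γ, hγ, h'⟩
  · refine ⟨fun _ => x, 0, le_rfl, continuous_const, by simp, rfl, h, by simp [h']⟩
  · refine ⟨γ.extend, 1, zero_le_one, γ.continuous_extend, ?_, by simp, by simp, ?_⟩
    · intro s hs t ht hst
      rw [Path.extend_apply _ hs, Path.extend_apply _ ht] at hst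
      exact congrArg Subtype.val (hγ.injective hst)
    · rw [← h']
      ext w
      constructor
      · rintro ⟨t, rfl⟩
        exact ⟨t, t.2, by simp⟩
      · rintro ⟨t, ht, rfl⟩
        exact ⟨⟨t, ht⟩, by rw [Path.extend_apply _ ht]⟩

lemma left_mem (x y : X) : x ∈ H.arc x y := by
  obtain ⟨g, b, hb, hg, hi, rfl, rfl, h⟩ := H.arc_param x y
  rw [h]; exact ⟨0, left_mem_Icc.2 hb, rfl⟩

lemma right_mem (x y : X) : y ∈ H.arc x y := by
  obtain ⟨g, b, hb, hg, hi, rfl, rfl, h⟩ := H.arc_param x y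
  rw [h]; exact ⟨b, right_mem_Icc.2 hb, rfl⟩

lemma arc_self (x : X) : H.arc x x = {x} := (H.arc_unique x x {x} (Or.inl ⟨rfl, rfl⟩)).symm

lemma arc_preconn (x y : X) : IsPreconnected (H.arc x y) := by
  obtain ⟨g, b, hb, hg, hi, rfl, rfl, h⟩ := H.arc_param x y
  rw [h]; exact isPreconnected_Icc.image _ hg.continuousOn

lemma arc_compact (x y : X) : IsCompact (H.arc x y) := by
  obtain ⟨g, b, hb, hg, hi, rfl, rfl, h⟩ := H.arc_param x y
  rw [h]; exact isCompact_Icc.image hg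

lemma arc_closed (x y : X) : IsClosed (H.arc x y) := by
  have := H.t2
  exact (H.arc_compact x y).isClosed

lemma arc_comm (x y : X) : H.arc x y = H.arc y x := by
  obtain ⟨g, b, hb, hg, hi, rfl, rfl, h⟩ := H.arc_param x y
  have hm : ∀ t ∈ Icc 0 b, b - t ∈ Icc 0 b := fun t ht => ⟨by linarith [ht.2], by linarith [ht.1]⟩
  have := H.arc_of_inj (g := fun t => g (b - t)) hb (by fun_prop) (by
    intro s hs t ht hst
    have := hi (hm s hs) (hm t ht) hst
    linarith)
  simp only [sub_zero, sub_self] at this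
  rw [h, this]
  ext w
  constructor
  · rintro ⟨t, ht, rfl⟩; exact ⟨b - t, hm t ht, by simp⟩
  · rintro ⟨t, ht, rfl⟩; exact ⟨b - t, hm t ht, rfl⟩

lemma arc_split {x y u : X} (hu : u ∈ H.arc x y) :
    H.arc x y = H.arc x u ∪ H.arc u y ∧ H.arc x u ∩ H.arc u y ⊆ {u} := by
  obtain ⟨g, b, hb, hg, hi, rfl, rfl, h⟩ := H.arc_param x y
  rw [h] at hu
  obtain ⟨t, ht, rfl⟩ := hu
  have h1 : Icc 0 t ⊆ Icc 0 b := Icc_subset_Icc_right ht.2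
  have h2 : Icc t b ⊆ Icc 0 b := Icc_subset_Icc_left ht.1
  rw [h, H.arc_of_inj ht.1 hg.continuousOn (hi.mono h1),
    H.arc_of_inj ht.2 hg.continuousOn (hi.mono h2), ← image_union, Icc_union_Icc_eq_Icc ht.1 ht.2]
  refine ⟨rfl, ?_⟩
  rintro w ⟨⟨r, hr, rfl⟩, ⟨s, hs, hrs⟩⟩
  have := hi (h2 hs) (h1 hr) hrs
  have : r = t := le_antisymm hr.2 (this ▸ hs.1)
  rw [this]; rfl

lemma arc_left_subset {x y u : X} (hu : u ∈ H.arc x y) : H.arc x u ⊆ H.arc x y := by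
  rw [(H.arc_split hu).1]; exact subset_union_left

lemma arc_right_subset {x y u : X} (hu : u ∈ H.arc x y) : H.arc u y ⊆ H.arc x y := by
  rw [(H.arc_split hu).1]; exact subset_union_right

lemma arc_concat {x y u : X} (hu : H.arc x u ∩ H.arc u y ⊆ {u}) :
    H.arc x y = H.arc x u ∪ H.arc u y := by
  obtain ⟨g, b, hb, hg, hi, rfl, rfl, h⟩ := H.arc_param x u
  obtain ⟨k, c, hc, hk, hki, hk0, rfl, hk'⟩ := H.arc_param (g b) y
  rw [h, hk'] at hu ⊢
  let m : ℝ → X := fun t => if t ≤ b then g t else k (t - b)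
  have hm : Continuous m := by
    refine Continuous.if_le hg (by fun_prop) continuous_id continuous_const ?_
    intro t ht
    subst ht
    simp [hk0]
  have hm1 : ∀ t ∈ Icc 0 b, m t = g t := fun t ht => if_pos ht.2
  have hm2 : ∀ t ∈ Icc 0 c, m (b + t) = k t := by
    intro t ht
    rcases ht.1.eq_or_lt with rfl | h0
    · simp [m, hk0]
    · simp [m, h0]
  have hcross : ∀ s ∈ Icc 0 b, ∀ t ∈ Icc 0 c, g s = k t → s = b ∧ t = 0 := by
    intro s hs t ht hst
    have h1 : g s = g b := hu ⟨⟨s, hs, rfl⟩, ⟨t, ht, hst.symm⟩⟩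
    refine ⟨hi hs (right_mem_Icc.2 hb) h1, hki ht (left_mem_Icc.2 hc) ?_⟩
    rw [← hst, h1, hk0]
  have hcase : ∀ t ∈ Icc 0 (b + c), t ∈ Icc 0 b ∨ ∃ r ∈ Icc 0 c, t = b + r := by
    intro t ht
    rcases le_total t b with h | h
    · exact Or.inl ⟨ht.1, h⟩
    · exact Or.inr ⟨t - b, ⟨by linarith, by linarith [ht.2]⟩, by ring⟩
  have hbc : (0 : ℝ) ≤ b + c := by linarith
  have hmi : InjOn m (Icc 0 (b + c)) := by
    intro s hs t ht hst
    rcases hcase s hs with h1 | ⟨r, hr, rfl⟩ <;> rcases hcase t ht with h2 | ⟨r', hr', rfl⟩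
    · rw [hm1 s h1, hm1 t h2] at hst; exact hi h1 h2 hst
    · rw [hm1 s h1, hm2 _ hr'] at hst
      obtain ⟨h3, h4⟩ := hcross _ h1 _ hr' hst
      linarith
    · rw [hm1 t h2, hm2 _ hr] at hst
      obtain ⟨h3, h4⟩ := hcross _ h2 _ hr hst.symm
      linarith
    · rw [hm2 _ hr, hm2 _ hr'] at hst
      rw [hki hr hr' hst]
  have key := H.arc_of_inj hbc hm.continuousOn hmi
  rw [hm1 0 (left_mem_Icc.2 hb), hm2 c (right_mem_Icc.2 hc)] at key
  rw [key]
  ext w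
  constructor
  · rintro ⟨t, ht, rfl⟩
    rcases hcase t ht with h1 | ⟨r, hr, rfl⟩
    · exact Or.inl ⟨t, h1, (hm1 t h1).symm⟩
    · exact Or.inr ⟨r, hr, (hm2 r hr).symm⟩
  · rintro (⟨t, ht, rfl⟩ | ⟨t, ht, rfl⟩)
    · exact ⟨t, ⟨ht.1, by linarith [ht.2]⟩, hm1 t ht⟩
    · exact ⟨b + t, ⟨by linarith [ht.1], by linarith [ht.2]⟩, hm2 t ht⟩

lemma arc_subset_union (x u y : X) : H.arc x y ⊆ H.arc x u ∪ H.arc u y := by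
  have : ∃ h ∈ H.arc x u, h ∈ H.arc u y ∧ H.arc x h ∩ H.arc u y ⊆ {h} := by
    obtain ⟨g, b, hb, hg, hi, rfl, rfl, h⟩ := H.arc_param x u
    have hcomp : IsCompact (Icc 0 b ∩ g ⁻¹' (H.arc (g b) y)) :=
      isCompact_Icc.inter_right ((H.arc_closed _ _).preimage hg)
    obtain ⟨t, ⟨ht, ht'⟩, hmin⟩ := hcomp.exists_isLeast
      ⟨b, right_mem_Icc.2 hb, H.left_mem _ _⟩
    refine ⟨g t, h ▸ ⟨t, ht, rfl⟩, ht', ?_⟩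
    have h1 : Icc 0 t ⊆ Icc 0 b := Icc_subset_Icc_right ht.2
    rw [H.arc_of_inj ht.1 hg.continuousOn (hi.mono h1)]
    rintro w ⟨⟨r, hr, rfl⟩, hw⟩
    have := hmin ⟨h1 hr, hw⟩
    rw [le_antisymm hr.2 this]; rfl
  obtain ⟨h, h1, h2, h3⟩ := this
  rw [H.arc_concat (u := h) (fun w hw => h3 ⟨hw.1, H.arc_right_subset h2 hw.2⟩)]
  exact union_subset_union (H.arc_left_subset h1) (H.arc_right_subset h2)

/-- if `t` lies between `x` and `k`, and `x` between `p` and `k`, then `x` is between `p`, `t`. -/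
lemma between_trans {p x t k : X} (hx : x ∈ H.arc p k) (ht : t ∈ H.arc x k) : x ∈ H.arc p t := by
  rw [H.arc_concat (u := x) (fun w hw => (H.arc_split hx).2 ⟨hw.1, H.arc_left_subset ht hw.2⟩)]
  exact Or.inl (H.right_mem _ _)

lemma share_initial {x a b : X} (h : x ∉ H.arc a b) :
    ∃ s, s ≠ x ∧ s ∈ H.arc x a ∧ s ∈ H.arc x b := by
  by_contra hc
  push Not at hc
  apply h
  rw [H.arc_concat (u := x)]
  · exact Or.inl (H.right_mem _ _)
  · rintro w ⟨h1, h2⟩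
    by_contra h3
    exact hc w h3 (H.arc_comm a x ▸ h1) h2

lemma arc_interior_infinite {x y : X} (h : x ≠ y) : (H.arc x y \ {x, y}).Infinite := by
  obtain ⟨g, b, hb, hg, hi, rfl, rfl, h'⟩ := H.arc_param x y
  have hb' : 0 < b := hb.lt_of_ne (by rintro rfl; exact h rfl)
  refine ((Ioo_infinite hb').image (hi.mono Ioo_subset_Icc_self)).mono ?_
  rintro w ⟨t, ht, rfl⟩
  refine ⟨h' ▸ ⟨t, Ioo_subset_Icc_self ht, rfl⟩, ?_⟩
  rintro (h1 | h1)
  · exact ht.1.ne' (hi (Ioo_subset_Icc_self ht) (left_mem_Icc.2 hb) h1)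
  · exact ht.2.ne (hi (Ioo_subset_Icc_self ht) (right_mem_Icc.2 hb) h1)

lemma mem_closure_arc {x y : X} (h : x ≠ y) : y ∈ closure (H.arc x y \ {y}) := by
  obtain ⟨g, b, hb, hg, hi, rfl, rfl, h'⟩ := H.arc_param x y
  have hb' : 0 < b := hb.lt_of_ne (by rintro rfl; exact h rfl)
  have h1 : b ∈ closure (Ioo 0 b) := by rw [closure_Ioo hb'.ne]; exact right_mem_Icc.2 hb
  refine closure_mono ?_ (image_closure_subset_closure_image hg ⟨b, h1, rfl⟩)
  rintro w ⟨t, ht, rfl⟩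
  refine ⟨h' ▸ ⟨t, Ioo_subset_Icc_self ht, rfl⟩, ?_⟩
  intro h1
  exact ht.2.ne (hi (Ioo_subset_Icc_self ht) (right_mem_Icc.2 hb) h1)

lemma armTo_eq_of_not_mem {x a b : X} (h : x ∉ H.arc a b) : armTo x a = armTo x b := by
  have ha : a ≠ x := by rintro rfl; exact h (H.left_mem _ _)
  refine arm_eq (armTo_mem ha) ?_
  exact subset_arm (armTo_mem ha) (H.arc_preconn a b) h
    (H.left_mem _ _) (mem_armTo ha) (H.right_mem _ _)

lemma finite_bad (p q : X) :
    {x | x ∈ H.arc p q ∧ x ≠ p ∧ x ≠ q ∧ armTo x p = armTo x q}.Finite := by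
  have := H.t2; have := H.conn; have := H.compact
  set B := {x | x ∈ H.arc p q ∧ x ≠ p ∧ x ≠ q ∧ armTo x p = armTo x q} with hB
  have hother : ∀ x ∈ B, ∀ y ∈ H.arc p q, y ≠ x → y ∈ armTo x p := by
    intro x hx y hy hyx
    obtain ⟨h1, h2, h3, h4⟩ := hx
    by_cases h : x ∈ H.arc p y
    · have h5 : x ∉ H.arc y q := fun h5 => hyx ((H.arc_split hy).2 ⟨h, h5⟩).symm
      rw [h4, ← H.armTo_eq_of_not_mem h5]
      exact mem_armTo hyx
    · rw [H.armTo_eq_of_not_mem h]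
      exact mem_armTo hyx
  have hex : ∀ x ∈ B \ {x | IsEndpoint x}, ∃ e D, D ∈ arms x ∧ D ≠ armTo x p ∧ e ∈ D ∧
      IsEndpoint e := by
    rintro x ⟨⟨h1, h2, h3, h4⟩, hx⟩
    have : ∃ D ∈ arms x, D ≠ armTo x p := by
      by_contra hc
      push Not at hc
      exact hx (isEndpoint_of (armTo_mem h2.symm) hc)
    obtain ⟨D, hD, hne⟩ := this
    obtain ⟨e, he, he'⟩ := exists_endpoint H.arms_finite hD
    exact ⟨e, D, hD, hne, he, he'⟩
  choose! e D hD hne he hee using hex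
  have hfin : (B \ {x | IsEndpoint x}).Finite := by
    refine Finite.of_finite_image (f := e) (H.endpoint_finite.subset ?_) ?_
    · rintro w ⟨x, hx, rfl⟩
      exact hee x hx
    · intro x hx y hy hxy
      by_contra hxy'
      have hyC : y ∈ armTo x p := hother x hx.1 y hy.1.1 (Ne.symm hxy')
      have hxC : x ∈ armTo y p := hother y hy.1 x hx.1.1 hxy'
      have hsub : insert y (D y) ⊆ armTo x p := by
        refine subset_arm (armTo_mem hx.1.2.1.symm)
          (insert_arm_preconn (H.arms_finite y) (hD y hy)) ?_ (mem_insert _ _) hyC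
        rintro (h | h)
        · exact hxy' h
        · exact hne y hy (arm_unique (hD y hy) (armTo_mem hy.1.2.1.symm) h hxC)
      have : e x ∈ armTo x p := hsub (mem_insert_of_mem _ (hxy ▸ he y hy))
      exact hne x hx (arm_unique (hD x hx) (armTo_mem hx.1.2.1.symm) (he x hx) this)
  exact (hfin.union H.endpoint_finite).subset (by
    intro x hx
    by_cases h : IsEndpoint x
    · exact Or.inr h
    · exact Or.inl ⟨hx, h⟩)

lemma exists_good {p q : X} (h : p ≠ q) :
    ∃ t ∈ H.arc p q, t ≠ p ∧ t ≠ q ∧ armTo t p ≠ armTo t q := by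
  obtain ⟨t, ht, ht'⟩ := (H.arc_interior_infinite h).exists_notMem_finite (H.finite_bad p q)
  have h1 : t ≠ p := fun e => ht.2 (Or.inl e)
  have h2 : t ≠ q := fun e => ht.2 (Or.inr e)
  exact ⟨t, ht.1, h1, h2, fun e => ht' ⟨ht.1, h1, h2, e⟩⟩

/-- arms are arc components -/
lemma armTo_eq {x p : X} (hp : p ≠ x) : armTo x p = {y | x ∉ H.arc p y} := by
  have := H.t2; have := H.conn; have := H.compact
  set U := {y | x ∉ H.arc p y} with hU
  have hpU : p ∈ U := by simp [hU, H.arc_self, hp.symm]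
  have hxU : x ∉ U := fun h => h (H.right_mem _ _)
  have hUpre : IsPreconnected U := by
    refine isPreconnected_of_forall p fun y hy => ⟨H.arc p y, ?_, H.left_mem _ _, H.right_mem _ _,
      H.arc_preconn _ _⟩
    intro w hw hxw
    exact hy (H.arc_left_subset hw hxw)
  have hxcl : x ∈ closure U := by
    refine closure_mono ?_ (H.mem_closure_arc hp)
    rintro w ⟨hw, hwx⟩ hxw
    exact hwx ((H.arc_split hw).2 ⟨hxw, H.right_mem _ _⟩).symm
  have hclosed : ∀ k ∈ closure U, k ≠ x → k ∈ U := by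
    intro k hk hkx hxk
    obtain ⟨t, ht, htx, htk, htne⟩ := H.exists_good hkx.symm
    apply htne
    have htU : t ∉ U := fun h => h (H.between_trans hxk ht)
    have hpre : IsPreconnected (insert x (insert k U)) :=
      hUpre.subset_closure ((subset_insert _ _).trans (subset_insert _ _))
        (insert_subset hxcl (insert_subset hk subset_closure))
    refine arm_eq (armTo_mem htx.symm) ?_
    refine subset_arm (armTo_mem htx.symm) hpre ?_ (mem_insert _ _) (mem_armTo htx.symm)
      (mem_insert_of_mem _ (mem_insert _ _))
    rintro (h | h | h)
    · exact htx h
    · exact htk h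
    · exact htU h
  have hopen : IsOpen U := by
    rw [isOpen_iff_forall_mem_open]
    intro y hy
    have hyx : y ≠ x := fun h => hxU (h ▸ hy)
    obtain ⟨t, ht, hty, htx, htne⟩ := H.exists_good hyx
    refine ⟨armTo t y, ?_, isOpen_arm (H.arms_finite t) (armTo_mem hty.symm), mem_armTo hty.symm⟩
    intro w hw hxw
    have hwt : armTo t y = armTo t w := arm_eq (armTo_mem hty.symm) hw
    have h1 : t ∈ H.arc w x := by
      by_contra h
      exact htne (hwt.trans (H.armTo_eq_of_not_mem h))
    have h2 : x ∉ H.arc y t := fun h => htx ((H.arc_split ht).2 ⟨h, H.right_mem _ _⟩).symm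
    have h3 : x ∉ H.arc w t := fun h => htx ((H.arc_split h1).2 ⟨h, H.right_mem _ _⟩).symm
    rcases H.arc_subset_union p y w hxw with h | h
    · exact hy h
    rcases H.arc_subset_union y t w h with h | h
    · exact h2 h
    · exact h3 (H.arc_comm t w ▸ h)
  apply Subset.antisymm
  · have hpre := arm_preconn (armTo_mem hp)
    have hsub : armTo x p ⊆ U ∪ (closure U)ᶜ := by
      intro k hk
      by_cases h : k ∈ closure U
      · exact Or.inl (hclosed k h (fun e => arm_not_mem (armTo_mem hp) (e ▸ hk)))
      · exact Or.inr h
    refine hpre.subset_left_of_subset_union hopen isClosed_closure.isOpen_compl ?_ hsub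
      ⟨p, mem_armTo hp, hpU⟩
    exact disjoint_compl_right.mono_left subset_closure
  · exact subset_arm (armTo_mem hp) hUpre hxU hpU (mem_armTo hp)

lemma armTo_eq_iff {x a b : X} (ha : a ≠ x) (hb : b ≠ x) :
    armTo x a = armTo x b ↔ x ∉ H.arc a b := by
  refine ⟨fun h => ?_, H.armTo_eq_of_not_mem⟩
  have : b ∈ armTo x a := h ▸ mem_armTo hb
  rw [H.armTo_eq ha] at this
  exact this

end HubbardTree

namespace HubbardTree
variable {X : Type*} [TopologicalSpace X] (H : HubbardTree X)

lemma no_loop (H : HubbardTree X) {h : ℝ → X} {s t : ℝ} (hst : s < t) (hc : ContinuousOn h (Icc s t))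
    (hi : InjOn h (Ioc s t)) (he : h s = h t) : False := by
  obtain ⟨m, hsm, hmt⟩ := exists_between hst
  obtain ⟨r, hsr, hrm⟩ := exists_between hsm
  have hne : ∀ u ∈ Ioc s m, h s ≠ h u := by
    intro u hu h'
    have := hi ⟨hst, le_rfl⟩ ⟨hu.1, hu.2.trans hmt.le⟩ (he.symm.trans h')
    linarith [hu.2]
  have h1 : InjOn h (Icc s m) := by
    intro a ha b hb hab
    rcases ha.1.eq_or_lt with rfl | ha' <;> rcases hb.1.eq_or_lt with rfl | hb'
    · rfl
    · exact absurd hab (hne b ⟨hb', hb.2⟩)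
    · exact absurd hab.symm (hne a ⟨ha', ha.2⟩)
    · exact hi ⟨ha', ha.2.trans hmt.le⟩ ⟨hb', hb.2.trans hmt.le⟩ hab
  have h2 : InjOn h (Icc m t) := hi.mono fun a (ha : a ∈ Icc m t) =>
    (⟨hsm.trans_le ha.1, ha.2⟩ : a ∈ Ioc s t)
  have e1 := H.arc_of_inj hsm.le (hc.mono (Icc_subset_Icc_right hmt.le)) h1
  have e2 := H.arc_of_inj hmt.le (hc.mono (Icc_subset_Icc_left hsm.le)) h2
  rw [he, H.arc_comm, e2] at e1
  have : h r ∈ h '' Icc s m := ⟨r, ⟨hsr.le, hrm.le⟩, rfl⟩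
  rw [← e1] at this
  obtain ⟨r', hr', hrr⟩ := this
  have := hi ⟨hsm.trans_le hr'.1, hr'.2⟩ ⟨hsr, hrm.le.trans hmt.le⟩ hrr
  linarith [hr'.1]

lemma local_inj {x : X} (hx : x ≠ H.c0) : ∃ U : Set X, IsOpen U ∧ x ∈ U ∧ InjOn H.f U := by
  obtain ⟨U, hU, hxU, he⟩ := H.local_homeo x hx
  exact ⟨U, hU, hxU, injOn_iff_injective.2 he.injective⟩

lemma injOn_arc {x y : X} (h : H.c0 ∉ H.arc x y) : InjOn H.f (H.arc x y) := by
  obtain ⟨g, b, hb, hg, hi, rfl, rfl, harc⟩ := H.arc_param x y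
  have hloc : ∀ r : ℝ, r ∈ Icc 0 b → ∃ U : Set X, IsOpen U ∧ g r ∈ U ∧ InjOn H.f U := by
    intro r hr
    exact H.local_inj (fun e => h (harc ▸ ⟨r, hr, e⟩))
  choose! U hUo hUm hUi using hloc
  obtain ⟨δ, hδ, hleb⟩ := lebesgue_number_lemma_of_metric (s := Icc (0 : ℝ) b)
    (c := fun r : Icc (0 : ℝ) b => g ⁻¹' (U r)) isCompact_Icc
    (fun r => (hUo r r.2).preimage hg) (fun r hr => mem_iUnion.2 ⟨⟨r, hr⟩, hUm r hr⟩)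
  have hfg : Continuous (fun t => H.f (g t)) := H.cont.comp hg
  have hnear : ∀ s ∈ Icc 0 b, ∀ t ∈ Icc 0 b, s < t → H.f (g s) = H.f (g t) → δ ≤ t - s := by
    intro s hs t ht hst he
    by_contra hlt
    push Not at hlt
    obtain ⟨i, hi'⟩ := hleb s hs
    have h1 : g s ∈ U i := hi' (Metric.mem_ball_self hδ)
    have h2 : g t ∈ U i := hi' (by rw [Metric.mem_ball, Real.dist_eq, abs_of_pos] <;> linarith)
    exact hst.ne (hi hs ht (hUi i i.2 h1 h2 he))
  have hkey : ∀ s ∈ Icc 0 b, ∀ t ∈ Icc 0 b, s < t → H.f (g s) ≠ H.f (g t) := by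
    intro s0 hs0 t0 ht0 hst0 he0
    have := H.t2
    let K : Set (ℝ × ℝ) := (Icc 0 b ×ˢ Icc 0 b) ∩
      ({p | δ ≤ p.2 - p.1} ∩ {p | H.f (g p.1) = H.f (g p.2)})
    have hK : IsCompact K := by
      refine (isCompact_Icc.prod isCompact_Icc).inter_right (IsClosed.inter ?_ ?_)
      · exact isClosed_le continuous_const (by fun_prop)
      · exact isClosed_eq (hfg.comp continuous_fst) (hfg.comp continuous_snd)
    obtain ⟨⟨s, t⟩, ⟨⟨hs, ht⟩, hd, he⟩, hmin⟩ := hK.exists_isMinOn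
      (f := fun p : ℝ × ℝ => p.2 - p.1) ⟨(s0, t0), ⟨hs0, ht0⟩, hnear _ hs0 _ ht0 hst0 he0, he0⟩
      (by fun_prop)
    simp only [mem_ofPred_eq] at hd he hs ht
    have hlt : s < t := by linarith
    have hmin' : ∀ a ∈ Ioc s t, ∀ c ∈ Ioc s t, a < c → H.f (g a) ≠ H.f (g c) := by
      intro a ha c hc hac hec
      have ha' : a ∈ Icc 0 b := ⟨hs.1.trans ha.1.le, ha.2.trans ht.2⟩
      have hc' : c ∈ Icc 0 b := ⟨hs.1.trans hc.1.le, hc.2.trans ht.2⟩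
      have := hmin (show (a, c) ∈ K from ⟨⟨ha', hc'⟩, hnear a ha' c hc' hac hec, hec⟩)
      simp only [mem_ofPred_eq] at this
      linarith [ha.1, hc.2]
    refine H.no_loop hlt hfg.continuousOn ?_ he
    intro a ha c hc hac
    rcases lt_trichotomy a c with h | h | h
    · exact absurd hac (hmin' a ha c hc h)
    · exact h
    · exact absurd hac.symm (hmin' c hc a ha h)
  rw [harc]
  rintro _ ⟨s, hs, rfl⟩ _ ⟨t, ht, rfl⟩ hst
  rcases lt_trichotomy s t with h | h | h
  · exact absurd hst (hkey s hs t ht h)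
  · rw [h]
  · exact absurd hst.symm (hkey t ht s hs h)

lemma injOn_arc' {x y : X} (h : H.c0 ∈ H.arc x y → y = H.c0) : InjOn H.f (H.arc x y) := by
  by_cases hc : H.c0 ∈ H.arc x y
  swap
  · exact H.injOn_arc hc
  have hy := h hc
  subst hy
  rw [H.arc_comm]
  obtain ⟨g, b, hb, hg, hi, hg0, rfl, harc⟩ := H.arc_param H.c0 x
  have hfg : Continuous (fun t => H.f (g t)) := H.cont.comp hg
  have hpos : ∀ s ∈ Icc 0 b, ∀ t ∈ Icc 0 b, 0 < s → 0 < t → H.f (g s) = H.f (g t) → s = t := by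
    have aux : ∀ s ∈ Icc 0 b, ∀ t ∈ Icc 0 b, 0 < s → s ≤ t → H.f (g s) = H.f (g t) → s = t := by
      intro s hs t ht h0 hst he
      have hsub : Icc s b ⊆ Icc 0 b := Icc_subset_Icc_left hs.1
      have ha := H.arc_of_inj hs.2 hg.continuousOn (hi.mono hsub)
      have hnc : H.c0 ∉ H.arc (g s) (g b) := by
        rw [ha]
        rintro ⟨r, hr, hr'⟩
        have := hi (hsub hr) (left_mem_Icc.2 hb) (hr'.trans hg0.symm)
        linarith [hr.1]
      refine hi hs ht (H.injOn_arc hnc ?_ ?_ he)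
      · rw [ha]; exact ⟨s, ⟨le_rfl, hs.2⟩, rfl⟩
      · rw [ha]; exact ⟨t, ⟨hst, ht.2⟩, rfl⟩
    intro s hs t ht h0 h0' he
    rcases le_total s t with h | h
    · exact aux s hs t ht h0 h he
    · exact (aux t ht s hs h0' h he.symm).symm
  have hzero : ∀ t ∈ Icc 0 b, 0 < t → H.f (g 0) ≠ H.f (g t) := by
    intro t ht h0 he
    refine H.no_loop h0 hfg.continuousOn ?_ he
    intro a ha c hc hac
    exact hpos a ⟨ha.1.le, ha.2.trans ht.2⟩ c ⟨hc.1.le, hc.2.trans ht.2⟩ ha.1 hc.1 hac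
  rw [harc]
  rintro _ ⟨s, hs, rfl⟩ _ ⟨t, ht, rfl⟩ hst
  rcases hs.1.eq_or_lt with rfl | hs' <;> rcases ht.1.eq_or_lt with rfl | ht'
  · rfl
  · exact absurd hst (hzero t ht ht')
  · exact absurd hst.symm (hzero s hs hs')
  · rw [hpos s hs t ht hs' ht' hst]

lemma image_arc {F : X → X} (hF : Continuous F) {x y : X} (hi : InjOn F (H.arc x y)) :
    F '' H.arc x y = H.arc (F x) (F y) := by
  obtain ⟨g, b, hb, hg, hgi, rfl, rfl, harc⟩ := H.arc_param x y
  have := H.arc_of_inj (g := F ∘ g) hb (hF.comp hg).continuousOn (by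
    intro s hs t ht hst
    exact hgi hs ht (hi (harc ▸ ⟨s, hs, rfl⟩) (harc ▸ ⟨t, ht, rfl⟩) hst))
  rw [harc, ← image_comp]
  exact this.symm

lemma local_arc {x : X} {U : Set X} (hU : IsOpen U) (hx : x ∈ U) :
    ∃ V : Set X, IsOpen V ∧ x ∈ V ∧ ∀ w ∈ V, H.arc x w ⊆ U := by
  have := H.t2; have := H.conn; have := H.compact
  have hex : ∀ u ∈ Uᶜ, ∃ t ∈ H.arc x u, t ≠ x ∧ t ≠ u := by
    intro u hu
    obtain ⟨t, ht, h1, h2, h3⟩ := H.exists_good (p := x) (q := u) (fun e => hu (e ▸ hx))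
    exact ⟨t, ht, h1, h2⟩
  choose! τ hτ hτx hτu using hex
  obtain ⟨F, hF, hcov⟩ := hU.isClosed_compl.isCompact.elim_nhds_subcover
    (fun u => armTo (τ u) u) (fun u hu =>
      (isOpen_arm (H.arms_finite _) (armTo_mem (hτu u hu).symm)).mem_nhds
        (mem_armTo (hτu u hu).symm))
  refine ⟨⋂ u ∈ F, (insert (τ u) (armTo (τ u) u))ᶜ, ?_, ?_, ?_⟩
  · exact isOpen_biInter_finset fun u hu =>
      (isClosed_insert_arm (armTo_mem (hτu u (hF u hu)).symm)).isOpen_compl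
  · simp only [mem_iInter]
    intro u hu
    have hu' := hF u hu
    rintro (h | h)
    · exact hτx u hu' h.symm
    · rw [H.armTo_eq (hτu u hu').symm] at h
      exact h (H.arc_comm _ _ ▸ hτ u hu')
  · intro w hw v hv
    by_contra hvU
    obtain ⟨u, hu, hvu⟩ := mem_iUnion₂.1 (hcov hvU)
    have hu' := hF u hu
    simp only [mem_iInter] at hw
    have hw' := hw u hu
    have hvt : v ≠ τ u := fun e => arm_not_mem (armTo_mem (hτu u hu').symm) (e ▸ hvu)
    have he := arm_eq (armTo_mem (hτu u hu').symm) hvu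
    have h1 : τ u ∈ H.arc x v := by
      by_contra hn
      have h2 := H.armTo_eq_of_not_mem hn
      exact (H.armTo_eq_iff (hτx u hu').symm (hτu u hu').symm).1 (h2.trans he.symm) (hτ u hu')
    have h2 : τ u ∈ H.arc v w := by
      by_contra hn
      have hwt : w ≠ τ u := fun e => hw' (Or.inl e)
      apply hw'
      right
      rw [he, H.armTo_eq_of_not_mem hn]
      exact mem_armTo hwt
    exact hvt ((H.arc_split hv).2 ⟨h1, h2⟩).symm

lemma maps_unique (H : HubbardTree X) {g : X → X} {x : X} {C D D' : Set X} (h : MapsLocalArm g x C D)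
    (h' : MapsLocalArm g x C D') : D = D' := by
  have := H.t2; have := H.conn
  obtain ⟨hC, hD, U, hU, hs⟩ := h
  obtain ⟨_, hD', U', hU', hs'⟩ := h'
  obtain ⟨y, ⟨hy, hy'⟩, hyC⟩ :=
    mem_closure_iff_nhds.1 (mem_closure_arm (H.arms_finite x) hC) _ (Filter.inter_mem hU hU')
  exact arm_unique hD hD' (hs ⟨y, ⟨hyC, hy⟩, rfl⟩) (hs' ⟨y, ⟨hyC, hy'⟩, rfl⟩)

lemma maps_comp {g k : X → X} (hk : Continuous k) {x : X} {C D E : Set X}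
    (h : MapsLocalArm k x C D) (h' : MapsLocalArm g (k x) D E) : MapsLocalArm (g ∘ k) x C E := by
  obtain ⟨hC, hD, U, hU, hs⟩ := h
  obtain ⟨_, hE, U', hU', hs'⟩ := h'
  refine ⟨hC, hE, U ∩ k ⁻¹' U', Filter.inter_mem hU (hk.continuousAt hU'), ?_⟩
  rintro _ ⟨y, ⟨hy, hyU, hyU'⟩, rfl⟩
  exact hs' ⟨k y, ⟨hs ⟨y, ⟨hy, hyU⟩, rfl⟩, hyU'⟩, rfl⟩

lemma maps_arm {x y : X} (hx : x ≠ H.c0) (hy : y ≠ x) (h : H.c0 ∈ H.arc x y → y = H.c0) :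
    MapsLocalArm H.f x (armTo x y) (armTo (H.f x) (H.f y)) := by
  have hinj := H.injOn_arc' h
  have hne : H.f y ≠ H.f x := fun e => hy (hinj (H.right_mem _ _) (H.left_mem _ _) e)
  obtain ⟨U, hUo, hxU, hUi⟩ := H.local_inj hx
  obtain ⟨V, hVo, hxV, hV⟩ := H.local_arc hUo hxU
  refine ⟨armTo_mem hy, armTo_mem hne, V, hVo.mem_nhds hxV, ?_⟩
  rintro _ ⟨w, ⟨hw, hwV⟩, rfl⟩
  have hxw : x ∉ H.arc w y := by
    rw [H.armTo_eq hy] at hw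
    exact H.arc_comm _ _ ▸ hw
  obtain ⟨s, hsx, hsw, hsy⟩ := H.share_initial hxw
  have h1 : H.f x ∉ H.f '' H.arc s y := by
    rintro ⟨r, hr, he⟩
    have hrx := hinj (H.arc_right_subset hsy hr) (H.left_mem _ _) he
    subst hrx
    exact hsx ((H.arc_split hsy).2 ⟨H.left_mem _ _, hr⟩).symm
  have h2 : H.f x ∉ H.f '' H.arc s w := by
    rintro ⟨r, hr, he⟩
    have hrx := hUi (hV w hwV (H.arc_right_subset hsw hr)) hxU he
    subst hrx
    exact hsx ((H.arc_split hsw).2 ⟨H.left_mem _ _, hr⟩).symm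
  have hfs := subset_arm (armTo_mem hne) ((H.arc_preconn s y).image _ H.cont.continuousOn) h1
    ⟨y, H.right_mem _ _, rfl⟩ (mem_armTo hne) ⟨s, H.left_mem _ _, rfl⟩
  exact subset_arm (armTo_mem hne) ((H.arc_preconn s w).image _ H.cont.continuousOn) h2
    ⟨s, H.left_mem _ _, rfl⟩ hfs ⟨w, H.right_mem _ _, rfl⟩

lemma maps_inj {x : X} {C C' D : Set X} (hx : x ≠ H.c0)
    (h : MapsLocalArm H.f x C D) (h' : MapsLocalArm H.f x C' D) : C = C' := by
  have := H.t2; have := H.conn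
  obtain ⟨hC, hD, W, hW, hs⟩ := h
  obtain ⟨hC', _, W', hW', hs'⟩ := h'
  obtain ⟨U, hUo, hxU, hUi⟩ := H.local_inj hx
  obtain ⟨V, hVo, hxV, hV⟩ := H.local_arc hUo hxU
  obtain ⟨y, ⟨hyW, hyV⟩, hyC⟩ := mem_closure_iff_nhds.1
    (mem_closure_arm (H.arms_finite x) hC) _ (Filter.inter_mem hW (hVo.mem_nhds hxV))
  obtain ⟨y', ⟨hyW', hyV'⟩, hyC'⟩ := mem_closure_iff_nhds.1
    (mem_closure_arm (H.arms_finite x) hC') _ (Filter.inter_mem hW' (hVo.mem_nhds hxV))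
  have hyx : y ≠ x := fun e => arm_not_mem hC (e ▸ hyC)
  have hyx' : y' ≠ x := fun e => arm_not_mem hC' (e ▸ hyC')
  have hfy : H.f y ∈ D := hs ⟨y, ⟨hyC, hyW⟩, rfl⟩
  have hfy' : H.f y' ∈ D := hs' ⟨y', ⟨hyC', hyW'⟩, rfl⟩
  rw [arm_eq hC hyC, arm_eq hC' hyC', H.armTo_eq_iff hyx hyx']
  intro hxm
  have hsub : H.arc y y' ⊆ U := by
    rw [(H.arc_split hxm).1, H.arc_comm y x]
    exact union_subset (hV y hyV) (hV y' hyV')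
  have him := H.image_arc H.cont (hUi.mono hsub)
  have h1 : H.f x ∈ H.arc (H.f y) (H.f y') := him ▸ ⟨x, hxm, rfl⟩
  have h2 : H.f y ≠ H.f x := fun e => arm_not_mem hD (e ▸ hfy)
  have h3 : H.f y' ≠ H.f x := fun e => arm_not_mem hD (e ▸ hfy')
  refine (H.armTo_eq_iff h2 h3).1 ?_ h1
  rw [← arm_eq hD hfy, ← arm_eq hD hfy']

/-- arms through `c0`. -/
lemma armTo_c0 {x y : X} (hx : x ≠ H.c0) (h : H.c0 ∈ H.arc x y) : armTo x y = armTo x H.c0 := by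
  refine (H.armTo_eq_of_not_mem fun hm => hx ?_).symm
  exact (H.arc_split h).2 ⟨H.left_mem _ _, hm⟩

lemma maps_c0 {x y : X} (hx : x ≠ H.c0) (h : H.c0 ∈ H.arc x y) :
    MapsLocalArm H.f x (armTo x y) (armTo (H.f x) H.c1) := by
  rw [H.armTo_c0 hx h]
  exact H.maps_arm hx hx.symm (fun _ => rfl)

lemma maps_exists {x : X} {C : Set X} (hx : x ≠ H.c0) (hC : C ∈ arms x) :
    ∃ D, MapsLocalArm H.f x C D := by
  obtain ⟨y, hy, rfl⟩ := hC
  by_cases h : H.c0 ∈ H.arc x y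
  · exact ⟨_, H.maps_c0 hx h⟩
  · exact ⟨_, H.maps_arm hx hy (fun h' => absurd h' h)⟩

lemma arms_nonempty (H : HubbardTree X) (x : X) : (arms x).Nonempty := by
  by_cases h : H.c0 = x
  · exact ⟨_, armTo_mem (x := x) (y := H.f H.c0) (h ▸ H.crit_not_fixed)⟩
  · exact ⟨_, armTo_mem h⟩

lemma c1_endpoint : IsEndpoint H.c1 := by
  have := H.t2; have := H.conn; have := H.compact
  by_contra hc1
  have hback : ∀ x, IsEndpoint (H.f x) → IsEndpoint x := by
    intro x hx
    have hx0 : x ≠ H.c0 := by rintro rfl; exact hc1 hx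
    obtain ⟨C, hC⟩ := H.arms_nonempty x
    refine isEndpoint_of hC fun D hD => ?_
    obtain ⟨C', hC'⟩ := H.maps_exists hx0 hC
    obtain ⟨D', hD'⟩ := H.maps_exists hx0 hD
    have := endpoint_unique hx hC'.2.1 hD'.2.1
    subst this
    exact H.maps_inj hx0 hD' hC'
  have hbackn : ∀ k x, IsEndpoint (H.f^[k] x) → IsEndpoint x := by
    intro k
    induction k with
    | zero => intro x h; exact h
    | succ k ih => intro x h; exact hback x (ih _ h)
  have hc0 : IsEndpoint H.c0 := by
    obtain ⟨C, hC⟩ := H.arms_nonempty H.c0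
    obtain ⟨e, _, he⟩ := exists_endpoint H.arms_finite hC
    obtain ⟨k, hk⟩ := H.endpoints_on_orbit e he
    exact hbackn k _ (hk ▸ he)
  have hfin : Finite {x : X | IsEndpoint x} := H.endpoint_finite
  choose s hs using H.surj
  let σ : {x : X | IsEndpoint x} → {x : X | IsEndpoint x} :=
    fun e => ⟨s e, hback _ (by rw [hs]; exact e.2)⟩
  have hσ : Function.Injective σ := by
    intro a b hab
    have : s a = s b := congrArg Subtype.val hab
    apply Subtype.ext
    rw [← hs a, ← hs b, this]
  obtain ⟨e, he⟩ := Finite.surjective_of_injective hσ ⟨H.c0, hc0⟩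
  have h1 : s e = H.c0 := congrArg Subtype.val he
  apply hc1
  have : H.c1 = e := by rw [← hs e, h1]; rfl
  rw [this]
  exact e.2

lemma c0_arms {a b c : X} (ha : a ≠ H.c0) (hb : b ≠ H.c0) (hc : c ≠ H.c0)
    (hab : H.c0 ∈ H.arc a b) (hbc : H.c0 ∈ H.arc b c) : H.c0 ∉ H.arc a c := by
  intro hac
  have hend : ∀ u v, u ≠ H.c1 → v ≠ H.c1 → H.c1 ∉ H.arc u v := by
    intro u v hu hv
    rw [← H.armTo_eq_iff hu hv]
    exact endpoint_unique H.c1_endpoint (armTo_mem hu) (armTo_mem hv)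
  have hprep : ∀ y, y ≠ H.c0 → InjOn H.f (H.arc H.c0 y) := by
    intro y hy
    rw [H.arc_comm]
    exact H.injOn_arc' (fun _ => rfl)
  have him : ∀ y, y ≠ H.c0 → H.f '' (H.arc H.c0 y) = H.arc H.c1 (H.f y) := fun y hy =>
    H.image_arc H.cont (hprep y hy)
  have hne : ∀ y, y ≠ H.c0 → H.f y ≠ H.c1 := fun y hy e =>
    hy (hprep y hy (H.right_mem _ _) (H.left_mem _ _) e)
  obtain ⟨s, hs1, hsa, hsb⟩ := H.share_initial (hend _ _ (hne a ha) (hne b hb))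
  obtain ⟨w, hw1, hws, hwc⟩ := H.share_initial (hend _ _ hs1 (hne c hc))
  have hwa := H.arc_left_subset hsa hws
  have hwb := H.arc_left_subset hsb hws
  rw [← him _ ha] at hwa
  rw [← him _ hb] at hwb
  rw [← him _ hc] at hwc
  obtain ⟨p, hp, hpw⟩ := hwa
  obtain ⟨q, hq, hqw⟩ := hwb
  obtain ⟨r, hr, hrw⟩ := hwc
  have hdis : ∀ y y' p, H.c0 ∈ H.arc y y' → p ∈ H.arc H.c0 y → p ∈ H.arc H.c0 y' →
      H.f p = w → False := by
    intro y y' p hy h1 h2 hpw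
    have : p = H.c0 := (H.arc_split hy).2 ⟨H.arc_comm y _ ▸ h1, h2⟩
    exact hw1 (hpw ▸ this ▸ rfl)
  obtain ⟨u, v, huv⟩ := H.two_preimages w
  have hpq : p ≠ q := by rintro rfl; exact hdis a b p hab hp hq hpw
  have hqr : q ≠ r := by rintro rfl; exact hdis b c q hbc hq hr hqw
  have hpr : p ≠ r := by rintro rfl; exact hdis a c p hac hp hr hpw
  have h1 := huv hpw
  have h2 := huv hqw
  have h3 := huv hrw
  simp only [mem_insert_iff, mem_singleton_iff] at h1 h2 h3
  grind

lemma symOf_eq_iff {x y : X} (hx : x ≠ H.c0) (hy : y ≠ H.c0) :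
    H.symOf x = H.symOf y ↔ H.c0 ∉ H.arc x y := by
  have hc1 : H.c1 ≠ H.c0 := H.crit_not_fixed
  have hT : ∀ w, w ∈ H.T1 ↔ H.c0 ∉ H.arc H.c1 w := by
    intro w
    have := H.armTo_eq hc1
    unfold armTo at this
    unfold T1
    rw [this]; rfl
  unfold symOf
  rw [if_neg hx, if_neg hy]
  have hsub := H.arc_subset_union x H.c1 y
  have h1 := H.arc_subset_union H.c1 x y
  have h2 := H.arc_subset_union H.c1 y x
  rw [H.arc_comm y x] at h2
  rw [H.arc_comm x H.c1] at hsub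
  by_cases hxT : H.c0 ∈ H.arc H.c1 x <;> by_cases hyT : H.c0 ∈ H.arc H.c1 y
  · rw [if_neg (fun h => (hT x).1 h hxT), if_neg (fun h => (hT y).1 h hyT)]
    simp only [true_iff]
    rw [H.arc_comm] at hxT
    exact H.c0_arms hx hc1 hy hxT hyT
  · rw [if_neg (fun h => (hT x).1 h hxT), if_pos ((hT y).2 hyT)]
    simp only [reduceCtorEq, false_iff, not_not]
    exact (h2 hxT).resolve_left hyT
  · rw [if_pos ((hT x).2 hxT), if_neg (fun h => (hT y).1 h hyT)]
    simp only [reduceCtorEq, false_iff, not_not]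
    exact (h1 hyT).resolve_left hxT
  · rw [if_pos ((hT x).2 hxT), if_pos ((hT y).2 hyT)]
    simp only [true_iff]
    exact fun h => (hsub h).elim hxT hyT

end HubbardTree

section Rho
variable {ν : ℕ → Sym}

lemma rho_eq {m r : ℕ} (hmr : m < r) (hr : ν r ≠ ν (r - m))
    (h : ∀ j, m < j → j < r → ν j = ν (j - m)) : rho ν m = (r : ℕ∞) := by
  unfold rho
  refine IsLeast.csInf_eq ⟨⟨r, rfl, hmr, hr⟩, ?_⟩
  rintro _ ⟨j, rfl, hj, hj'⟩
  by_contra hlt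
  push Not at hlt
  exact hj' (h j hj (by exact_mod_cast hlt))

lemma rho_spec {m r : ℕ} (h : rho ν m = (r : ℕ∞)) : m < r ∧ ν r ≠ ν (r - m) := by
  unfold rho at h
  have hne : {e : ℕ∞ | ∃ j : ℕ, e = (j : ℕ∞) ∧ m < j ∧ ν j ≠ ν (j - m)}.Nonempty := by
    by_contra hc
    rw [not_nonempty_iff_eq_empty] at hc
    rw [hc, sInf_empty] at h
    exact ENat.top_ne_natCast r h
  obtain ⟨j, hj, hmj, hj'⟩ := csInf_mem hne
  rw [h] at hj
  have : r = j := by exact_mod_cast hj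
  subst this
  exact ⟨hmj, hj'⟩

lemma rhoOrbit_head {k m : ℕ} (h : RhoOrbit ν k m) :
    k = m ∨ ∃ j : ℕ, rho ν k = (j : ℕ∞) ∧ RhoOrbit ν j m := by
  induction h with
  | refl => exact Or.inl rfl
  | step h1 h2 ih =>
    rcases ih with rfl | ⟨j, hj, hj'⟩
    · exact Or.inr ⟨_, h2, RhoOrbit.refl _⟩
    · exact Or.inr ⟨j, hj, hj'.step h2⟩

lemma not_address {m n : ℕ} (hm : RhoOrbit ν 1 m) (hmn : m < n)
    (h : ∀ j, m < j → j ≤ n → ν j = ν (j - m)) : ¬ InternalAddress ν n := by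
  have key : ∀ l, RhoOrbit ν 1 l → RhoOrbit ν l m ∨ n < l := by
    intro l hl
    induction hl with
    | refl => exact Or.inl hm
    | step h1 h2 ih =>
      have h3 := rho_spec h2
      rcases ih with ih | ih
      · rcases rhoOrbit_head ih with rfl | ⟨j, hj, hj'⟩
        · right
          by_contra hc
          push Not at hc
          exact h3.2 (h _ h3.1 hc)
        · rw [hj] at h2
          rw [Nat.cast_inj] at h2
          subst h2
          exact Or.inl hj'
      · exact Or.inr (ih.trans h3.1)
  have hle : ∀ a b, RhoOrbit ν a b → a ≤ b := by
    intro a b hab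
    induction hab with
    | refl => exact le_rfl
    | step h1 h2 ih => exact ih.trans (rho_spec h2).1.le
  intro hn
  rcases key n hn with h1 | h1
  · exact absurd (hle _ _ h1) (by omega)
  · omega

end Rho

lemma ne_of_armTo_mem {X : Type*} [TopologicalSpace X] {x y : X} (h : armTo x y ∈ arms x) :
    y ≠ x := by
  rintro rfl
  have := arm_nonempty h
  unfold armTo at this
  rw [connectedComponentIn_eq_empty (by simp)] at this
  exact not_nonempty_empty this

namespace HubbardTree
variable {X : Type*} [TopologicalSpace X] (H : HubbardTree X)

/-- Working data extracted from being characteristic. -/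
structure CharData (z : X) : Prop where
  ne0 : H.c0 ≠ z
  ne1 : H.c1 ≠ z
  orb : ∀ k, H.f^[k] z ≠ H.c0
  arms_ne : armTo z H.c0 ≠ armTo z H.c1
  arm_orb : ∀ k, H.f^[k] z ≠ z → armTo z (H.f^[k] z) = armTo z H.c0

lemma IsCharacteristic.data {z : X} (h : H.IsCharacteristic z) : H.CharData z := by
  obtain ⟨Cv, Cz, hv, hz, hne, h1, h0, hk⟩ := h
  have ne1 : H.c1 ≠ z := fun e => arm_not_mem hv (e ▸ h1)
  refine ⟨fun e => arm_not_mem hz (e ▸ h0), ne1, ?_, ?_, ?_⟩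
  · intro k e
    have he : H.f^[k + 1] z = H.c1 := by
      rw [Function.iterate_succ_apply', e]; rfl
    have := hk (k + 1) (by rw [he]; exact ne1)
    rw [he] at this
    exact hne (arm_unique hv hz h1 this)
  · rw [← arm_eq hz h0, ← arm_eq hv h1]
    exact hne.symm
  · intro k e
    rw [← arm_eq hz h0, ← arm_eq hz (hk k e)]

variable {H} {z : X}

lemma CharData.armTo_c1 (hd : H.CharData z) (k : ℕ) (h : H.f^[k] z ≠ z) :
    armTo (H.f^[k] z) H.c1 = armTo (H.f^[k] z) z := by
  have h1 : z ∈ H.arc (H.f^[k] z) H.c1 := by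
    by_contra hc
    have := (H.armTo_eq_of_not_mem hc)
    rw [hd.arm_orb k h] at this
    exact hd.arms_ne this
  refine (H.armTo_eq_of_not_mem fun h2 => h ?_).symm
  exact (H.arc_split h1).2 ⟨H.left_mem _ _, h2⟩

lemma maps_succ {k : ℕ} {C D E : Set X} (h : MapsLocalArm (H.f^[k]) z C D)
    (h' : MapsLocalArm H.f (H.f^[k] z) D E) : MapsLocalArm (H.f^[k + 1]) z C E := by
  rw [Function.iterate_succ']
  exact maps_comp (H.cont.iterate k) h h'

lemma maps_id {C : Set X} (hC : C ∈ arms z) : MapsLocalArm (H.f^[0]) z C C :=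
  ⟨hC, hC, univ, Filter.univ_mem, by simp⟩

lemma CharData.iter_exists (hd : H.CharData z) {C : Set X} (hC : C ∈ arms z) (k : ℕ) :
    ∃ D, MapsLocalArm (H.f^[k]) z C D := by
  induction k with
  | zero => exact ⟨C, maps_id hC⟩
  | succ k ih =>
    obtain ⟨D, hD⟩ := ih
    obtain ⟨E, hE⟩ := H.maps_exists (hd.orb k) hD.2.1
    exact ⟨E, maps_succ hD hE⟩

lemma CharData.iter_inj (hd : H.CharData z) (k : ℕ) : ∀ {C C' D : Set X},
    MapsLocalArm (H.f^[k]) z C D → MapsLocalArm (H.f^[k]) z C' D → C = C' := by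
  induction k with
  | zero =>
    intro C C' D h h'
    rw [H.maps_unique (maps_id (H := H) h.1) h, H.maps_unique (maps_id (H := H) h'.1) h']
  | succ k ih =>
    intro C C' D h h'
    obtain ⟨E, hE⟩ := hd.iter_exists h.1 k
    obtain ⟨E', hE'⟩ := hd.iter_exists h'.1 k
    obtain ⟨F, hF⟩ := H.maps_exists (hd.orb k) hE.2.1
    obtain ⟨F', hF'⟩ := H.maps_exists (hd.orb k) hE'.2.1
    have e1 := H.maps_unique (maps_succ hE hF) h
    have e2 := H.maps_unique (maps_succ hE' hF') h'
    subst e1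
    subst e2
    have := H.maps_inj (hd.orb k) hF hF'
    subst this
    exact ih hE hE'

/-- One step of the dynamics of arms pointing to points of the orbit: no separation. -/
lemma CharData.step_same (hd : H.CharData z) {k j : ℕ} {C : Set X}
    (h : MapsLocalArm (H.f^[k]) z C (armTo (H.f^[k] z) (H.f^[j] z)))
    (hc : H.c0 ∉ H.arc (H.f^[k] z) (H.f^[j] z)) :
    MapsLocalArm (H.f^[k + 1]) z C (armTo (H.f^[k + 1] z) (H.f^[j + 1] z)) := by
  rw [Function.iterate_succ_apply', Function.iterate_succ_apply']
  exact maps_succ h (H.maps_arm (hd.orb k) (ne_of_armTo_mem h.2.1) (fun h' => absurd h' hc))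

lemma CharData.step_diff (hd : H.CharData z) {k : ℕ} {y : X} {C : Set X}
    (h : MapsLocalArm (H.f^[k]) z C (armTo (H.f^[k] z) y))
    (hc : H.c0 ∈ H.arc (H.f^[k] z) y) :
    MapsLocalArm (H.f^[k + 1]) z C (armTo (H.f^[k + 1] z) H.c1) := by
  rw [Function.iterate_succ_apply']
  exact maps_succ h (H.maps_c0 (hd.orb k) hc)

lemma CharData.address_aux (hd : H.CharData z) {n : ℕ} (hper : ExactPeriod H.f z n) (k : ℕ) :
    1 ≤ k → k < n → ∃ m, 1 ≤ m ∧ m ≤ k ∧ RhoOrbit (H.itin z) 1 m ∧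
      (∀ j, m < j → j ≤ k → H.itin z j = H.itin z (j - m)) ∧
      MapsLocalArm (H.f^[k]) z (armTo z H.c0) (armTo (H.f^[k] z) (H.f^[k - m] z)) := by
  intro hk
  induction k, hk using Nat.le_induction with
  | base =>
    intro hn
    refine ⟨1, le_rfl, le_rfl, RhoOrbit.refl _, fun j h1 h2 => by omega, ?_⟩
    have h1 := hd.step_diff (k := 0) (y := H.c0) (maps_id (H := H) (armTo_mem hd.ne0))
      (H.right_mem _ _)
    rw [zero_add, hd.armTo_c1 1 (hper.2.2 1 le_rfl hn)] at h1
    exact h1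
  | succ k hk ih =>
    intro hkn
    obtain ⟨m, hm1, hmk, hro, hag, hmap⟩ := ih (by omega)
    have hsym := H.symOf_eq_iff (hd.orb k) (hd.orb (k - m))
    have hidx : k + 1 - m - 1 = k - m := by omega
    by_cases he : H.itin z (k + 1) = H.itin z (k + 1 - m)
    · refine ⟨m, hm1, by omega, hro, ?_, ?_⟩
      · intro j h1 h2
        rcases Nat.lt_or_ge k j with h | h
        · have : j = k + 1 := by omega
          rw [this, he]
        · exact hag j h1 h
      · simp only [itin, hidx, Nat.add_sub_cancel] at he
        have := hd.step_same hmap (hsym.1 he)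
        rwa [show k - m + 1 = k + 1 - m by omega] at this
    · have hrho := rho_eq (ν := H.itin z) (m := m) (r := k + 1) (by omega) he
        (fun j h1 h2 => hag j h1 (by omega))
      refine ⟨k + 1, by omega, le_rfl, hro.step hrho, fun j h1 h2 => by omega, ?_⟩
      simp only [itin, hidx, Nat.add_sub_cancel] at he
      have := hd.step_diff hmap (not_not.1 fun h => he (hsym.2 h))
      rw [hd.armTo_c1 _ (hper.2.2 _ (by omega) hkn)] at this
      simpa using this

lemma CharData.dichotomy (hd : H.CharData z) {n : ℕ} (hper : ExactPeriod H.f z n) :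
    (InternalAddress (H.itin z) n ∧
      MapsLocalArm (H.f^[n]) z (armTo z H.c0) (armTo z H.c1)) ∨
    (¬ InternalAddress (H.itin z) n ∧
      MapsLocalArm (H.f^[n]) z (armTo z H.c0) (armTo z H.c0)) := by
  obtain ⟨hn, hz, hmin⟩ := id hper
  rcases hn.eq_or_lt with rfl | hn
  · left
    refine ⟨RhoOrbit.refl _, ?_⟩
    have h1 := hd.step_diff (k := 0) (y := H.c0) (maps_id (H := H) (armTo_mem hd.ne0))
      (H.right_mem _ _)
    rw [zero_add, hz] at h1
    exact h1
  · obtain ⟨k, rfl⟩ : ∃ k, n = k + 1 := ⟨n - 1, by omega⟩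
    obtain ⟨m, hm1, hmk, hro, hag, hmap⟩ := hd.address_aux hper k (by omega) (by omega)
    have hsym := H.symOf_eq_iff (hd.orb k) (hd.orb (k - m))
    have hidx : k + 1 - m - 1 = k - m := by omega
    by_cases he : H.itin z (k + 1) = H.itin z (k + 1 - m)
    · right
      refine ⟨not_address hro (by omega) ?_, ?_⟩
      · intro j h1 h2
        rcases Nat.lt_or_ge k j with h | h
        · have : j = k + 1 := by omega
          rw [this, he]
        · exact hag j h1 h
      · simp only [itin, hidx, Nat.add_sub_cancel] at he
        have := hd.step_same hmap (hsym.1 he)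
        rwa [hz, hd.arm_orb _ (hmin _ (by omega) (by omega))] at this
    · left
      have hrho := rho_eq (ν := H.itin z) (m := m) (r := k + 1) (by omega) he
        (fun j h1 h2 => hag j h1 (by omega))
      refine ⟨hro.step hrho, ?_⟩
      simp only [itin, hidx, Nat.add_sub_cancel] at he
      have := hd.step_diff hmap (not_not.1 fun h => he (hsym.2 h))
      rwa [hz] at this

lemma iter_mul {n : ℕ} (hper : ExactPeriod H.f z n) (j : ℕ) : H.f^[n * j] z = z := by
  have : Function.IsPeriodicPt H.f n z := hper.2.1
  exact this.mul_const j

lemma dvd_of_iter {n k : ℕ} (hper : ExactPeriod H.f z n) (h : H.f^[k] z = z) : n ∣ k := by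
  have hp : Function.IsPeriodicPt H.f n z := hper.2.1
  have h1 : H.f^[k % n] z = z := by rw [hp.iterate_mod_apply, h]
  by_contra hc
  have h2 : k % n ≠ 0 := fun e => hc (Nat.dvd_of_mod_eq_zero e)
  exact hper.2.2 _ (by omega) (Nat.mod_lt _ hper.1) h1

lemma CharData.hit_aux (hd : H.CharData z) {n : ℕ} (hper : ExactPeriod H.f z n) {C : Set X}
    {k : ℕ} (h : MapsLocalArm (H.f^[k]) z C (armTo (H.f^[k] z) H.c1)) :
    ∃ j, MapsLocalArm (H.f^[n * j]) z C (armTo z H.c0) ∨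
      MapsLocalArm (H.f^[n * j]) z C (armTo z H.c1) := by
  have sub : ∀ k, MapsLocalArm (H.f^[k]) z C (armTo (H.f^[k] z) H.c1) →
      (∃ j, MapsLocalArm (H.f^[k]) z C (armTo (H.f^[k] z) (H.f^[j] z))) ∨
      ∃ l, MapsLocalArm (H.f^[n * l]) z C (armTo z H.c1) := by
    intro k h
    by_cases hk : H.f^[k] z = z
    · right
      obtain ⟨l, rfl⟩ := dvd_of_iter hper hk
      rw [hk] at h
      exact ⟨l, h⟩
    · left
      rw [hd.armTo_c1 k hk] at h
      exact ⟨0, h⟩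
  have main : ∀ m, (∃ j, MapsLocalArm (H.f^[k + m]) z C (armTo (H.f^[k + m] z) (H.f^[j] z))) ∨
      ∃ l, MapsLocalArm (H.f^[n * l]) z C (armTo z H.c1) := by
    intro m
    induction m with
    | zero => exact sub k h
    | succ m ih =>
      rcases ih with ⟨j, hj⟩ | ih
      · by_cases hc : H.c0 ∈ H.arc (H.f^[k + m] z) (H.f^[j] z)
        · exact sub _ (hd.step_diff hj hc)
        · exact Or.inl ⟨j + 1, hd.step_same hj hc⟩
      · exact Or.inr ih
  rcases main (n * k - k) with ⟨j, hj⟩ | ⟨l, hl⟩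
  · have hle : k ≤ n * k := Nat.le_mul_of_pos_left k hper.1
    rw [Nat.add_sub_cancel' hle, iter_mul hper] at hj
    refine ⟨k, Or.inl ?_⟩
    have h2 := hj.2.1
    rw [iter_mul hper] at h2
    rwa [hd.arm_orb j (ne_of_armTo_mem h2)] at hj
  · exact ⟨l, Or.inr hl⟩

lemma CharData.hit (hd : H.CharData z) {n : ℕ} (hper : ExactPeriod H.f z n) {C : Set X}
    (hC : C ∈ arms z) : ∃ j, MapsLocalArm (H.f^[n * j]) z C (armTo z H.c0) ∨
      MapsLocalArm (H.f^[n * j]) z C (armTo z H.c1) := by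
  have := H.t2; have := H.conn; have := H.compact
  by_cases hb : IsBranchPt z
  swap
  · have : C = armTo z H.c0 ∨ C = armTo z H.c1 := by
      by_contra hc
      push Not at hc
      apply hb
      have h3 : ({C, armTo z H.c0, armTo z H.c1} : Set (Set X)).ncard = 3 :=
        ncard_eq_three.2 ⟨_, _, _, hc.1, hc.2, hd.arms_ne, rfl⟩
      unfold IsBranchPt
      rw [← h3]
      refine ncard_le_ncard ?_ (H.arms_finite z)
      rintro D (rfl | rfl | rfl)
      · exact hC
      · exact armTo_mem hd.ne0
      · exact armTo_mem hd.ne1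
    have hid := maps_id (H := H) hC
    rcases this with h | h
    · exact ⟨0, Or.inl (by rw [mul_zero, ← h]; exact hid)⟩
    · exact ⟨0, Or.inr (by rw [mul_zero, ← h]; exact hid)⟩
  obtain ⟨e, heC, he⟩ := exists_endpoint H.arms_finite hC
  have hez : e ≠ z := fun h => arm_not_mem hC (h ▸ heC)
  have hex := H.expansive z e hez.symm (Or.inl hb) (Or.inr (H.endpoints_on_orbit e he))
  classical
  let i := Nat.find hex
  have hi : H.c0 ∈ H.f^[i] '' H.arc z e := Nat.find_spec hex
  have hlt : ∀ k < i, H.c0 ∉ H.f^[k] '' H.arc z e := fun k hk => Nat.find_min hex hk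
  have main : ∀ k ≤ i, H.f^[k] '' H.arc z e = H.arc (H.f^[k] z) (H.f^[k] e) ∧
      MapsLocalArm (H.f^[k]) z C (armTo (H.f^[k] z) (H.f^[k] e)) := by
    intro k
    induction k with
    | zero =>
      intro _
      refine ⟨by simp, ?_⟩
      have : armTo (H.f^[0] z) (H.f^[0] e) = C := (arm_eq hC heC).symm
      rw [this]
      exact maps_id hC
    | succ k ih =>
      intro hk
      obtain ⟨h1, h2⟩ := ih (by omega)
      have h3 := hlt k (by omega)
      rw [h1] at h3
      rw [Function.iterate_succ_apply', Function.iterate_succ_apply']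
      refine ⟨?_, ?_⟩
      · rw [← H.image_arc H.cont (H.injOn_arc h3), ← h1, ← image_comp, Function.iterate_succ']
      · exact maps_succ h2 (H.maps_arm (hd.orb k) (ne_of_armTo_mem h2.2.1)
          (fun h' => absurd h' h3))
  obtain ⟨h1, h2⟩ := main i le_rfl
  rw [h1] at hi
  exact hd.hit_aux hper (hd.step_diff h2 hi)

lemma CharData.exists_perm (hd : H.CharData z) {n : ℕ} (hper : ExactPeriod H.f z n) :
    ∃ σ : Equiv.Perm (arms z), ∀ (C : arms z) (j : ℕ),
      MapsLocalArm (H.f^[n * j]) z (C : Set X) ((σ ^ j) C : arms z) := by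
  have hfin : Finite (arms z) := H.arms_finite z
  have hex : ∀ C : arms z, ∃ D : arms z, MapsLocalArm (H.f^[n]) z (C : Set X) (D : Set X) := by
    intro C
    obtain ⟨D, hD⟩ := hd.iter_exists C.2 n
    have h2 := hD.2.1
    rw [hper.2.1] at h2
    exact ⟨⟨D, h2⟩, hD⟩
  choose s hs using hex
  have hinj : Function.Injective s := by
    intro a b hab
    have h1 := hs a
    rw [hab] at h1
    exact Subtype.ext (hd.iter_inj n h1 (hs b))
  refine ⟨Equiv.ofBijective s (Finite.injective_iff_bijective.1 hinj), fun C j => ?_⟩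
  induction j with
  | zero => exact maps_id C.2
  | succ j ih =>
    rw [pow_succ', Equiv.Perm.mul_apply, Equiv.ofBijective_apply, mul_add, mul_one, add_comm,
      Function.iterate_add]
    refine maps_comp (H.cont.iterate _) ih ?_
    rw [iter_mul hper]
    exact hs _

lemma CharData.main (hd : H.CharData z) {n : ℕ} (hper : ExactPeriod H.f z n) :
    (MapsLocalArm (H.f^[n]) z (armTo z H.c0) (armTo z H.c1) → ArmsTransitive H.f n z) ∧
    (MapsLocalArm (H.f^[n]) z (armTo z H.c0) (armTo z H.c0) →
      H.OtherArmsTransitive n z ∧ ¬ ArmsTransitive H.f n z) := by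
  have hfin : Finite (arms z) := H.arms_finite z
  obtain ⟨σ, hσ⟩ := hd.exists_perm hper
  let A0 : arms z := ⟨armTo z H.c0, armTo_mem hd.ne0⟩
  let A1 : arms z := ⟨armTo z H.c1, armTo_mem hd.ne1⟩
  have hhit : ∀ C : arms z, ∃ j : ℕ, (σ ^ j) C = A0 ∨ (σ ^ j) C = A1 := by
    intro C
    obtain ⟨j, hj | hj⟩ := hd.hit hper C.2
    · exact ⟨j, Or.inl (Subtype.ext (H.maps_unique (hσ C j) hj))⟩
    · exact ⟨j, Or.inr (Subtype.ext (H.maps_unique (hσ C j) hj))⟩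
  have htr : ∀ C C' : arms z, σ.SameCycle C A1 → σ.SameCycle C' A1 →
      ∃ j : ℕ, MapsLocalArm (H.f^[n * j]) z (C : Set X) (C' : Set X) := by
    intro C C' h h'
    obtain ⟨j, hj⟩ := (h.trans h'.symm).exists_nat_pow_eq
    have := hσ C j
    rw [hj] at this
    exact ⟨j, this⟩
  have hone : ∀ D, MapsLocalArm (H.f^[n]) z (armTo z H.c0) D → (σ A0 : Set X) = D := by
    intro D hD
    have := hσ A0 1
    rw [mul_one, pow_one] at this
    exact H.maps_unique this hD
  refine ⟨fun h => ?_, fun h => ?_⟩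
  · have h01 : σ A0 = A1 := Subtype.ext (hone _ h)
    have hall : ∀ C : arms z, σ.SameCycle C A1 := by
      intro C
      obtain ⟨j, hj | hj⟩ := hhit C
      · refine ⟨(j + 1 : ℕ), ?_⟩
        rw [zpow_natCast, pow_succ', Equiv.Perm.mul_apply, hj, h01]
      · exact ⟨j, by rw [zpow_natCast, hj]⟩
    intro C hC C' hC'
    exact htr ⟨C, hC⟩ ⟨C', hC'⟩ (hall _) (hall _)
  · have h00 : σ A0 = A0 := Subtype.ext (hone _ h)
    have hpow : ∀ j : ℕ, (σ ^ j) A0 = A0 := by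
      intro j
      induction j with
      | zero => rfl
      | succ j ih => rw [pow_succ', Equiv.Perm.mul_apply, ih, h00]
    have hall : ∀ C : arms z, (C : Set X) ≠ armTo z H.c0 → σ.SameCycle C A1 := by
      intro C hne
      obtain ⟨j, hj | hj⟩ := hhit C
      · exact absurd (congrArg Subtype.val ((σ ^ j).injective (hj.trans (hpow j).symm))) hne
      · exact ⟨j, by rw [zpow_natCast, hj]⟩
    refine ⟨?_, ?_⟩
    · intro C hC hne C' hC' hne'
      exact htr ⟨C, hC⟩ ⟨C', hC'⟩ (hall _ hne) (hall _ hne')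
    · intro ht
      obtain ⟨j, hj⟩ := ht _ A0.2 _ A1.2
      have h1 := hσ A0 j
      rw [hpow j] at h1
      exact hd.arms_ne (H.maps_unique h1 hj)

end HubbardTree

end Helpers

/-- Proposition 4.2, "Type of Characteristic Point".
Let `z` be a characteristic periodic point with itinerary `τ` and exact period `n`.
If `n` occurs in the internal address of `τ`, the first return map sends the local
arm towards `c₀` to the local arm towards `c₁` and permutes all local arms
transitively; if `n` does not occur, the first return map fixes the local arm
towards `c₀` and permutes all other local arms transitively. In particular, a
characteristic periodic branch point of period `n` is evil iff the internal address
of its itinerary does not contain `n`. -/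
theorem type_of_characteristic_point
    {X : Type*} [TopologicalSpace X] (H : HubbardTree X) (z : X) (n : ℕ)
    (hchar : H.IsCharacteristic z) (hper : ExactPeriod H.f z n) :
    (InternalAddress (H.itin z) n →
      MapsLocalArm (H.f^[n]) z (armTo z H.c0) (armTo z H.c1) ∧
      ArmsTransitive H.f n z) ∧
    (¬ InternalAddress (H.itin z) n →
      MapsLocalArm (H.f^[n]) z (armTo z H.c0) (armTo z H.c0) ∧
      H.OtherArmsTransitive n z) ∧
    (IsBranchPt z →
      (¬ ArmsTransitive H.f n z ↔ ¬ InternalAddress (H.itin z) n)) := by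
  have hd := HubbardTree.IsCharacteristic.data H hchar
  have hm := hd.main hper
  rcases hd.dichotomy hper with ⟨h1, h2⟩ | ⟨h1, h2⟩
  · exact ⟨fun _ => ⟨h2, hm.1 h2⟩, fun h => absurd h1 h,
      fun _ => ⟨fun h => absurd (hm.1 h2) h, fun h => absurd h1 h⟩⟩
  · exact ⟨fun h => absurd h h1, fun _ => ⟨h2, (hm.2 h2).1⟩,
      fun _ => ⟨fun _ => h1, fun _ => (hm.2 h2).2⟩⟩

end HubbardTrees
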